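/- arXiv:1205.3102 — 4 statements merged into one kernel-verified Lean document; each statement's English description precedes it below -/
import Mathlib

section
/- Let n ≥ 2d. Consider the cones Σ^S_{n,2d} ⊆ ℝ^{π(2d)} for n ≥ 2d. Then the set-theoretic limit of this sequence of cones exists and equals their intersection; that is, ⋃_{N≥2d} ⋂_{n≥N} Σ^S_{n,2d} = ⋂_{N≥2d} ⋃_{n≥N} Σ^S_{n,2d} = ⋂_{n≥2d} Σ^S_{n,2d}. -/
open MvPolynomial

/-- The i-th normalized power sum `p_i^{(n)} = (1/n)(x_1^i + ⋯ + x_n^i)`. -/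
noncomputable def psum (n i : ℕ) : MvPolynomial (Fin n) ℝ :=
  C ((n : ℝ)⁻¹) * ∑ j : Fin n, X j ^ i

/-- For a partition `λ` of `k`, `p_λ^{(n)} = p_{λ_1}^{(n)} ⋯ p_{λ_l}^{(n)}`. -/
noncomputable def pPart (n : ℕ) {k : ℕ} (lam : Nat.Partition k) : MvPolynomial (Fin n) ℝ :=
  (lam.parts.map (psum n)).prod

/-- The symmetric form `f^{(n)} = Σ_{λ ⊢ k} c_λ p_λ^{(n)}` determined by the
coefficient vector `c`. -/
noncomputable def symForm (n : ℕ) {k : ℕ} (c : Nat.Partition k → ℝ) : MvPolynomial (Fin n) ℝ :=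
  ∑ lam : Nat.Partition k, C (c lam) * pPart n lam

/-- `Σ^S_{n,2d}`: coefficient vectors whose associated symmetric form in `n`
variables is a sum of squares of polynomials. -/
def SCone (n : ℕ) (k : ℕ) : Set (Nat.Partition k → ℝ) :=
  {c | IsSumSq (symForm n c)}

/-- In a finite-dimensional space, the convex hull of a compact set is compact. -/
theorem IsCompact.convexHull_of_finiteDimensional {E : Type*} [NormedAddCommGroup E]
    [NormedSpace ℝ E] [FiniteDimensional ℝ E] {K : Set E} (hK : IsCompact K) :
    IsCompact (convexHull ℝ K) := by
  have hcover : convexHull ℝ K = ⋃ k ∈ Set.Iic (Module.finrank ℝ E + 1),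
      (fun a : (Fin k → ℝ) × (Fin k → E) => ∑ i, a.1 i • a.2 i) ''
        (stdSimplex ℝ (Fin k) ×ˢ Set.univ.pi fun _ => K) := by
    apply Set.Subset.antisymm
    · intro x hx
      obtain ⟨ι, _, z, w, hz, hind, hw, hw1, rfl⟩ := eq_pos_convex_span_of_mem_convexHull hx
      let e := (Fintype.equivFin ι).symm
      simp only [Set.mem_iUnion]
      refine ⟨Fintype.card ι, ?_, (w ∘ e, z ∘ e), ⟨⟨fun i => (hw _).le, ?_⟩, ?_⟩, ?_⟩
      · exact hind.card_le_finrank_succ.trans (Nat.add_le_add_right (Submodule.finrank_le _) 1)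
      · rw [← hw1]; exact e.sum_comp w
      · exact fun i _ => hz ⟨_, rfl⟩
      · exact e.sum_comp fun i => w i • z i
    · simp only [Set.iUnion_subset_iff]
      rintro k - _ ⟨⟨w, z⟩, ⟨hw, hz⟩, rfl⟩
      exact (convex_convexHull ℝ K).sum_mem (fun i _ => hw.1 i) hw.2
        fun i _ => subset_convexHull ℝ K (hz i trivial)
  rw [hcover]
  refine (Set.finite_Iic _).isCompact_biUnion fun k _ => ?_
  refine ((isCompact_stdSimplex ℝ (Fin k)).prod (isCompact_univ_pi fun _ => hK)).image ?_
  fun_prop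

/-- The cone of sums of squares of elements of a space `U` of functions on a finite set. -/
def sqCone {ι : Type*} (U : Submodule ℝ (ι → ℝ)) : AddSubmonoid (ι → ℝ) :=
  AddSubmonoid.closure ((fun u => u * u) '' U)

section sqCone

variable {ι : Type*} (U : Submodule ℝ (ι → ℝ))

theorem smul_mem_sqCone {c : ℝ} (hc : 0 ≤ c) {v : ι → ℝ} (hv : v ∈ sqCone U) :
    c • v ∈ sqCone U := by
  induction hv using AddSubmonoid.closure_induction with
  | mem v hv =>
    obtain ⟨u, hu, rfl⟩ := hv
    refine AddSubmonoid.subset_closure ⟨√c • u, U.smul_mem _ hu, ?_⟩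
    simp [smul_smul, Real.mul_self_sqrt hc]
  | zero => simp
  | add v w _ _ hv hw => rw [smul_add]; exact add_mem hv hw

theorem convex_sqCone : Convex ℝ (sqCone U : Set (ι → ℝ)) :=
  fun _ hv _ hw _ _ ha hb _ => add_mem (smul_mem_sqCone U ha hv) (smul_mem_sqCone U hb hw)

variable [Fintype ι]

/-- The squares of the elements of the Euclidean unit ball of `U`. -/
def ballSquares : Set (ι → ℝ) :=
  (fun u => u * u) '' (U ∩ {u | ∑ i, u i * u i ≤ 1})

theorem zero_mem_ballSquares : 0 ∈ ballSquares U :=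
  ⟨0, ⟨U.zero_mem, by simp⟩, by simp⟩

theorem isCompact_ballSquares : IsCompact (ballSquares U) := by
  refine IsCompact.image ?_ (by fun_prop)
  refine Metric.isCompact_of_isClosed_isBounded
    (U.closed_of_finiteDimensional.inter (isClosed_le (by fun_prop) continuous_const)) ?_
  refine (Metric.isBounded_closedBall (x := 0) (r := 1)).subset ?_
  rintro u ⟨-, hu⟩
  rw [mem_closedBall_zero_iff, pi_norm_le_iff_of_nonneg zero_le_one]
  intro i
  have := Finset.single_le_sum (fun j _ => mul_self_nonneg (u j)) (Finset.mem_univ i)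
  exact abs_le_one_iff_mul_self_le_one.2 (this.trans hu)

open scoped Pointwise in
theorem mem_smul_convexHull_of_mem_sqCone {v : ι → ℝ} (hv : v ∈ sqCone U) :
    0 ≤ ∑ i, v i ∧ v ∈ (∑ i, v i) • convexHull ℝ (ballSquares U) := by
  have h0 := subset_convexHull ℝ _ (zero_mem_ballSquares U)
  induction hv using AddSubmonoid.closure_induction with
  | mem v hv =>
    obtain ⟨u, hu, rfl⟩ := hv
    have hnn : 0 ≤ ∑ i, (u * u) i := Finset.sum_nonneg fun i _ => mul_self_nonneg (u i)
    refine ⟨hnn, ?_⟩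
    rcases hnn.eq_or_lt with h | h
    · have : u * u = 0 := by
        ext i
        exact (Finset.sum_eq_zero_iff_of_nonneg fun i _ => mul_self_nonneg (u i)).1 h.symm i
          (Finset.mem_univ i)
      exact ⟨0, h0, by simp [this]⟩
    · set s := ∑ i, (u * u) i with hs
      refine ⟨s⁻¹ • (u * u), subset_convexHull ℝ _ ⟨(√s)⁻¹ • u, ⟨U.smul_mem _ hu, ?_⟩, ?_⟩, ?_⟩
      · have : ∑ i, ((√s)⁻¹ • u) i * ((√s)⁻¹ • u) i = s⁻¹ * s := by
          rw [hs, Finset.mul_sum]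
          refine Finset.sum_congr rfl fun i _ => ?_
          rw [← hs]
          simp only [Pi.smul_apply, Pi.mul_apply, smul_eq_mul]
          rw [mul_mul_mul_comm, ← mul_inv, Real.mul_self_sqrt h.le]
        rw [Set.mem_ofPred_eq, this, inv_mul_cancel₀ h.ne']
      · simp only [smul_mul_smul_comm, ← mul_inv, Real.mul_self_sqrt h.le]
      · simp [smul_smul, h.ne']
  | zero => exact ⟨by simp, 0, h0, by simp⟩
  | add v w _ _ hv hw =>
    simp only [Pi.add_apply, Finset.sum_add_distrib]
    refine ⟨add_nonneg hv.1 hw.1, ?_⟩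
    rw [(convex_convexHull ℝ _).add_smul hv.1 hw.1]
    exact Set.add_mem_add hv.2 hw.2

open scoped Pointwise in
theorem isClosed_sqCone : IsClosed (sqCone U : Set (ι → ℝ)) := by
  refine IsSeqClosed.isClosed fun v w hv hvw => ?_
  have hsum : Filter.Tendsto (fun n => ∑ i, v n i) Filter.atTop (nhds (∑ i, w i)) :=
    ((show Continuous fun x : ι → ℝ => ∑ i, x i by fun_prop).tendsto w).comp hvw
  set R := |∑ i, w i| + 1
  have hRpos : 0 < R := by positivity
  have hR : ∑ i, w i < R := (le_abs_self _).trans_lt (lt_add_one _)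
  have hsub : R • convexHull ℝ (ballSquares U) ⊆ (sqCone U : Set (ι → ℝ)) := by
    rintro _ ⟨x, hx, rfl⟩
    refine smul_mem_sqCone U hRpos.le (convexHull_min ?_ (convex_sqCone U) hx)
    rintro _ ⟨u, hu, rfl⟩
    exact AddSubmonoid.subset_closure ⟨u, hu.1, rfl⟩
  refine hsub (((isCompact_ballSquares U).convexHull_of_finiteDimensional.smul
    R).isClosed.mem_of_tendsto hvw ?_)
  filter_upwards [hsum.eventually_lt_const hR] with n hn
  obtain ⟨h0, x, hx, hxv⟩ := mem_smul_convexHull_of_mem_sqCone U (hv n)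
  refine ⟨((∑ i, v n i) / R) • x, (convex_convexHull ℝ _).smul_mem_of_zero_mem
    (subset_convexHull ℝ _ (zero_mem_ballSquares U)) hx
    ⟨by positivity, (div_le_one hRpos).2 hn.le⟩, ?_⟩
  refine Eq.trans ?_ hxv
  change R • ((∑ i, v n i) / R) • x = (∑ i, v n i) • x
  rw [smul_smul, mul_div_cancel₀ _ hRpos.ne']

end sqCone

namespace MvPolynomial
section MonomialOrder
open MonomialOrder
open scoped MonomialOrder
variable {σ : Type*}

theorem coeff_nonneg_of_degree_le (m : MonomialOrder σ) {a : MvPolynomial σ ℝ}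
    (ha : 0 ≤ m.leadingCoeff a) {D : σ →₀ ℕ} (hD : m.degree a ≼[m] D) : 0 ≤ a.coeff D := by
  rcases hD.eq_or_lt with h | h
  · rw [← m.toSyn.injective h]; exact ha
  · exact (m.coeff_eq_zero_of_lt h).ge

theorem degree_le_degree_add (m : MonomialOrder σ) {a b : MvPolynomial σ ℝ}
    (ha : 0 ≤ m.leadingCoeff a) (hb : 0 ≤ m.leadingCoeff b) :
    m.degree a ≼[m] m.degree (a + b) := by
  rcases lt_or_ge (m.toSyn (m.degree a)) (m.toSyn (m.degree b)) with h | h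
  · rw [m.degree_add_eq_right_of_lt h]; exact h.le
  · rcases ha.eq_or_lt with h0 | h0
    · rw [m.leadingCoeff_eq_zero_iff.1 h0.symm]; simp
    · refine m.le_degree (mem_support_iff.2 ?_)
      rw [coeff_add]
      exact (add_pos_of_pos_of_nonneg h0 (coeff_nonneg_of_degree_le m hb h)).ne'

theorem leadingCoeff_nonneg_of_isSumSq (m : MonomialOrder σ) {f : MvPolynomial σ ℝ}
    (hf : IsSumSq f) : 0 ≤ m.leadingCoeff f := by
  induction hf with
  | zero => simp
  | @sq_add a s _ ih =>
    have ha : 0 ≤ m.leadingCoeff (a * a) := by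
      rw [m.leadingCoeff_mul]; exact mul_self_nonneg _
    rw [MonomialOrder.leadingCoeff, coeff_add]
    refine add_nonneg (coeff_nonneg_of_degree_le m ha (degree_le_degree_add m ha ih))
      (coeff_nonneg_of_degree_le m ih ?_)
    rw [add_comm]
    exact degree_le_degree_add m ih ha

theorem totalDegree_le_totalDegree_add_of_isSumSq [LinearOrder σ] [WellFoundedGT σ]
    {a b : MvPolynomial σ ℝ}
    (ha : IsSumSq a) (hb : IsSumSq b) : a.totalDegree ≤ (a + b).totalDegree :=
  degLex_totalDegree_monotone (degree_le_degree_add _ (leadingCoeff_nonneg_of_isSumSq _ ha)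
    (leadingCoeff_nonneg_of_isSumSq _ hb))

end MonomialOrder

/-- Evaluation of a polynomial on the grid `{0, …, N - 1}^m`. -/
noncomputable def gridEval (m N : ℕ) : MvPolynomial (Fin m) ℝ →ₐ[ℝ] ((Fin m → Fin N) → ℝ) :=
  AlgHom.pi fun g => aeval fun i => ((g i : ℕ) : ℝ)

theorem eq_of_gridEval_eq {m N : ℕ} {p q : MvPolynomial (Fin m) ℝ} (hp : p.totalDegree < N)
    (hq : q.totalDegree < N) (h : gridEval m N p = gridEval m N q) : p = q := by
  rw [← sub_eq_zero]
  refine eq_zero_of_eval_zero_at_prod_finset _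
    (fun _ => (Finset.range N).map ⟨Nat.cast, Nat.cast_injective⟩) (fun i => ?_) fun x hx => ?_
  · rw [Finset.card_map, Finset.card_range]
    exact (degreeOf_le_totalDegree _ i).trans_lt ((totalDegree_sub _ _).trans_lt (max_lt hp hq))
  · simp only [Finset.mem_map, Finset.mem_range, Function.Embedding.coeFn_mk] at hx
    choose g hg hgx using hx
    obtain rfl : (fun i => (g i : ℝ)) = x := _root_.funext hgx
    have := congrFun h fun i => ⟨g i, hg i⟩
    rw [map_sub, sub_eq_zero]
    simpa [gridEval, aeval_eq_eval] using this

end MvPolynomial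

namespace MvPolynomial

theorem totalDegree_le_totalDegree_add_of_isSumSq' {σ : Type*} [LinearOrder σ] [WellFoundedGT σ]
    {a b : MvPolynomial σ ℝ} (ha : IsSumSq a) (hb : IsSumSq b) :
    b.totalDegree ≤ (a + b).totalDegree :=
  add_comm b a ▸ totalDegree_le_totalDegree_add_of_isSumSq hb ha

/-- Restrictions to the grid `{0, …, 2d}^m` of polynomials of total degree at most `d`. -/
noncomputable def gridSpace (m d : ℕ) : Submodule ℝ ((Fin m → Fin (2 * d + 1)) → ℝ) :=
  (restrictTotalDegree (Fin m) ℝ d).map (gridEval m (2 * d + 1)).toLinearMap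

theorem gridEval_mem_sqCone {m d : ℕ} {f : MvPolynomial (Fin m) ℝ} (hf : IsSumSq f)
    (hd : f.totalDegree ≤ 2 * d) : gridEval m (2 * d + 1) f ∈ sqCone (gridSpace m d) := by
  induction hf with
  | zero => simp
  | @sq_add a s hs ih =>
    rw [map_add, map_mul]
    refine add_mem (AddSubmonoid.subset_closure
      ⟨_, Submodule.mem_map_of_mem (f := (gridEval m (2 * d + 1)).toLinearMap) ?_, rfl⟩)
      (ih ((totalDegree_le_totalDegree_add_of_isSumSq' (.mul_self a) hs).trans hd))
    rw [mem_restrictTotalDegree]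
    rcases eq_or_ne a 0 with rfl | ha
    · simp
    · have := (totalDegree_le_totalDegree_add_of_isSumSq (.mul_self a) hs).trans hd
      rw [totalDegree_mul_of_isDomain ha ha] at this
      lia

theorem isSumSq_of_gridEval_mem_sqCone {m d : ℕ} {f : MvPolynomial (Fin m) ℝ}
    (hd : f.totalDegree ≤ 2 * d) (hf : gridEval m (2 * d + 1) f ∈ sqCone (gridSpace m d)) :
    IsSumSq f := by
  suffices ∀ v ∈ sqCone (gridSpace m d), ∃ p : MvPolynomial (Fin m) ℝ, IsSumSq p ∧
      p.totalDegree ≤ 2 * d ∧ gridEval m (2 * d + 1) p = v by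
    obtain ⟨p, hp, hpd, hpf⟩ := this _ hf
    rwa [← eq_of_gridEval_eq (Nat.lt_succ_of_le hpd) (Nat.lt_succ_of_le hd) hpf]
  intro v hv
  induction hv using AddSubmonoid.closure_induction with
  | mem v hv =>
    obtain ⟨_, ⟨q, hq, rfl⟩, rfl⟩ := hv
    have hq' : q.totalDegree ≤ d := (mem_restrictTotalDegree _ _ _).1 hq
    exact ⟨q * q, .mul_self q, (totalDegree_mul _ _).trans (by lia), map_mul _ _ _⟩
  | zero => exact ⟨0, .zero, by simp, map_zero _⟩
  | add v w _ _ hv hw =>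
    obtain ⟨p, hp, hpd, rfl⟩ := hv
    obtain ⟨q, hq, hqd, rfl⟩ := hw
    exact ⟨p + q, hp.add hq, (totalDegree_add _ _).trans (max_le hpd hqd), map_add _ _ _⟩

/-- Sums of squares of bounded degree form a closed cone. -/
theorem isSumSq_of_frequently_of_tendsto {m d : ℕ} {α : Type*} {l : Filter α}
    {g : α → MvPolynomial (Fin m) ℝ} {f : MvPolynomial (Fin m) ℝ}
    (hg : ∀ a, (g a).totalDegree ≤ 2 * d) (hf : f.totalDegree ≤ 2 * d)
    (hsq : ∃ᶠ a in l, IsSumSq (g a))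
    (hlim : Filter.Tendsto (fun a => gridEval m (2 * d + 1) (g a)) l
      (nhds (gridEval m (2 * d + 1) f))) : IsSumSq f :=
  isSumSq_of_gridEval_mem_sqCone hf <| (isClosed_sqCone _).mem_of_frequently_of_tendsto
    (hsq.mono fun a ha => gridEval_mem_sqCone ha (hg a)) hlim

end MvPolynomial

theorem isSumSq_map {R S F : Type*} [NonUnitalNonAssocSemiring R]
    [NonUnitalNonAssocSemiring S] [FunLike F R S] [NonUnitalRingHomClass F R S] (φ : F) {f : R}
    (hf : IsSumSq f) : IsSumSq (φ f) := by
  induction hf with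
  | zero => rw [map_zero]; exact .zero
  | sq_add a _ ih => rw [map_add, map_mul]; exact .sq_add _ ih

theorem totalDegree_symForm_le (n : ℕ) {k : ℕ} (c : Nat.Partition k → ℝ) :
    (symForm n c).totalDegree ≤ k := by
  have hpsum (i : ℕ) : (psum n i).totalDegree ≤ i := by
    refine (totalDegree_mul _ _).trans ?_
    rw [totalDegree_C, zero_add]
    exact totalDegree_finsetSum_le fun j _ => (totalDegree_X_pow j i).le
  refine totalDegree_finsetSum_le fun lam _ => (totalDegree_mul _ _).trans ?_
  rw [totalDegree_C, zero_add]
  refine (totalDegree_multiset_prod _).trans ?_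
  conv_rhs => rw [← lam.parts_sum, ← Multiset.map_id lam.parts]
  rw [Multiset.map_map]
  exact Multiset.sum_map_le_sum_map _ _ fun i _ => hpsum i

/-- The substitution sending `n / m` of the `n` variables to each of the `m` variables and the
remaining ones to zero. -/
noncomputable def collapse (n m : ℕ) : MvPolynomial (Fin n) ℝ →ₐ[ℝ] MvPolynomial (Fin m) ℝ :=
  aeval fun j => if h : j < n / m * m then X ⟨j / (n / m), Nat.div_lt_of_lt_mul h⟩ else 0

/-- The proportion of the `n` variables not sent to zero by `collapse n m`. -/
noncomputable def collapseRatio (n m : ℕ) : ℝ := (n / m : ℕ) * m / n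

theorem sum_range_mul_div {M : Type*} [AddCommMonoid M] (g : ℕ → M) (k m : ℕ) :
    ∑ j ∈ Finset.range (k * m), g (j / k) = k • ∑ i ∈ Finset.range m, g i := by
  induction m with
  | zero => simp
  | succ m ih =>
    rw [mul_add_one, Finset.sum_range_add, ih, Finset.sum_range_succ, smul_add]
    congr 1
    rw [Finset.sum_congr rfl fun x hx => ?_, Finset.sum_const, Finset.card_range]
    have hx := Finset.mem_range.1 hx
    rw [Nat.mul_add_div (by lia), Nat.div_eq_of_lt hx, add_zero]

theorem collapse_psum (n m : ℕ) {i : ℕ} (hi : 0 < i) :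
    collapse n m (psum n i) = C (collapseRatio n m) * psum m i := by
  let g : ℕ → MvPolynomial (Fin m) ℝ := fun a => if h : a < m then X ⟨a, h⟩ ^ i else 0
  let F : ℕ → MvPolynomial (Fin m) ℝ := fun j => if j < n / m * m then g (j / (n / m)) else 0
  have hF : collapse n m (_root_.psum n i) = C ((n : ℝ)⁻¹) * ∑ j : Fin n, F j := by
    simp only [_root_.psum, collapse, map_mul, map_sum, map_pow, aeval_X, ← algebraMap_eq,
      AlgHom.commutes]
    congr 1
    refine Finset.sum_congr rfl fun j _ => ?_
    by_cases h : (j : ℕ) < n / m * m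
    · simp [F, g, h, Nat.div_lt_of_lt_mul h]
    · simp [F, h, hi.ne']
  have hsum : ∑ j : Fin n, F j = C ((n / m : ℕ) : ℝ) * ∑ j : Fin m, X j ^ i := by
    rw [Fin.sum_univ_eq_sum_range F, ← Finset.sum_subset
      (Finset.range_subset_range.2 (Nat.div_mul_le_self n m)) fun j _ hj =>
        if_neg (by simpa using hj),
      Finset.sum_congr rfl fun j hj => if_pos (Finset.mem_range.1 hj),
      sum_range_mul_div, ← Fin.sum_univ_eq_sum_range, nsmul_eq_mul]
    simp [g]
  rw [hF, hsum, _root_.psum, ← mul_assoc, ← mul_assoc, ← C_mul, ← C_mul]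
  rcases eq_or_ne m 0 with rfl | hm
  · simp
  · have hm' : (m : ℝ) ≠ 0 := Nat.cast_ne_zero.2 hm
    congr 2
    rw [collapseRatio]
    field_simp

theorem collapse_symForm (n m : ℕ) {k : ℕ} (c : Nat.Partition k → ℝ) :
    collapse n m (symForm n c) =
      symForm m fun lam => c lam * collapseRatio n m ^ lam.parts.card := by
  simp only [symForm, map_sum, map_mul, pPart, map_multiset_prod, Multiset.map_map,
    Function.comp_def]
  refine Finset.sum_congr rfl fun lam _ => ?_
  rw [Multiset.map_congr rfl fun i hi => collapse_psum n m (lam.parts_pos hi),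
    Multiset.prod_map_mul, Multiset.map_const', Multiset.prod_replicate, mul_assoc, map_pow]
  simp [collapse]

theorem tendsto_collapseRatio {m : ℕ} (hm : 0 < m) :
    Filter.Tendsto (fun n => collapseRatio n m) Filter.atTop (nhds 1) := by
  have hm' : (m : ℝ) ≠ 0 := by positivity
  have h := ((tendsto_nat_floor_mul_div_atTop (R := ℝ) (a := (m : ℝ)⁻¹) (by positivity)).comp
    tendsto_natCast_atTop_atTop).mul_const (m : ℝ)
  rw [inv_mul_cancel₀ hm'] at h
  refine h.congr fun n => ?_
  simp only [Function.comp_apply, collapseRatio]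
  rw [inv_mul_eq_div, Nat.floor_div_natCast, Nat.floor_natCast]
  ring

theorem mem_SCone_of_frequently {d m : ℕ} (hm : 2 * d ≤ m) {c : Nat.Partition (2 * d) → ℝ}
    (hc : ∃ᶠ n in Filter.atTop, c ∈ SCone n (2 * d)) : c ∈ SCone m (2 * d) := by
  refine isSumSq_of_frequently_of_tendsto
    (g := fun n => symForm m fun lam => c lam * collapseRatio n m ^ lam.parts.card)
    (fun n => totalDegree_symForm_le _ _) (totalDegree_symForm_le _ _)
    (hc.mono fun n hn => ?_) ?_
  · rw [← collapse_symForm]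
    exact isSumSq_map (collapse n m) hn
  · simp only [symForm, map_sum, map_mul (gridEval m (2 * d + 1)), ← algebraMap_eq, AlgHom.commutes]
    refine tendsto_finsetSum _ fun lam _ => Filter.Tendsto.mul_const _ ?_
    refine ((continuous_algebraMap ℝ ((Fin m → Fin (2 * d + 1)) → ℝ)).tendsto _).comp
      (f := fun n => c lam * collapseRatio n m ^ lam.parts.card) ?_
    rcases Nat.eq_zero_or_pos m with rfl | hpos
    · have : lam.parts = 0 := by
        refine Multiset.eq_zero_of_forall_notMem fun i hi => ?_
        have := Multiset.le_sum_of_mem hi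
        have := lam.parts_pos hi
        have := lam.parts_sum
        lia
      simp [this]
    · simpa using ((tendsto_collapseRatio hpos).pow lam.parts.card).const_mul (c lam)

/-- The set-theoretic limit of the cones `Σ^S_{n,2d} ⊆ ℝ^{π(2d)}` exists and
equals their intersection `⋂_{n ≥ 2d} Σ^S_{n,2d}`. -/
theorem limit_SCone (d : ℕ) :
    ((⋃ N ∈ {N : ℕ | 2 * d ≤ N}, ⋂ n ∈ {n : ℕ | N ≤ n}, SCone n (2 * d)) =
        ⋂ n ∈ {n : ℕ | 2 * d ≤ n}, SCone n (2 * d)) ∧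
    ((⋂ N ∈ {N : ℕ | 2 * d ≤ N}, ⋃ n ∈ {n : ℕ | N ≤ n}, SCone n (2 * d)) =
        ⋂ n ∈ {n : ℕ | 2 * d ≤ n}, SCone n (2 * d)) := by
  constructor
  · apply Set.Subset.antisymm
    · intro c hc
      simp only [Set.mem_iUnion, Set.mem_iInter, Set.mem_ofPred_eq] at hc ⊢
      obtain ⟨N, -, hN⟩ := hc
      intro m hm
      refine mem_SCone_of_frequently hm (Filter.Eventually.frequently ?_)
      filter_upwards [Filter.eventually_ge_atTop N] with n hn using hN n hn
    · exact Set.subset_biUnion_of_mem (u := fun N => ⋂ n ∈ {n : ℕ | N ≤ n}, SCone n (2 * d))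
        (le_refl (2 * d))
  · apply Set.Subset.antisymm
    · intro c hc
      simp only [Set.mem_iUnion, Set.mem_iInter, Set.mem_ofPred_eq] at hc ⊢
      refine fun m hm => mem_SCone_of_frequently hm (Filter.frequently_atTop.2 fun N => ?_)
      obtain ⟨n, hn, h⟩ := hc (max N (2 * d)) (le_max_right _ _)
      exact ⟨n, (le_max_left _ _).trans hn, h⟩
    · intro c hc
      simp only [Set.mem_iUnion, Set.mem_iInter, Set.mem_ofPred_eq] at hc ⊢
      exact fun N hN => ⟨N, le_rfl, hc N hN⟩
end

section
/- (Half degree principle) Let f be a symmetric form of degree 2d in n real variables and set k := max{2, d}. Then f is nonnegative on ℝ^n if and only if f(y) ≥ 0 for all y ∈ A_k, where A_k := {x ∈ ℝ^n : |{x_1,…,x_n}| ≤ k} is the set of points having at most k distinct coordinates. -/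
open MvPolynomial

namespace MvPolynomial

open Finset Filter Topology

theorem isHomogeneous_esymm (σ R : Type*) [Fintype σ] [CommSemiring R] (i : ℕ) :
    (esymm σ R i).IsHomogeneous i := by
  refine IsHomogeneous.sum _ _ _ fun t ht => ?_
  rw [mem_powersetCard_univ] at ht
  simpa [ht] using
    IsHomogeneous.prod t (fun j => (X j : MvPolynomial σ R)) (fun _ => 1) fun j _ =>
      isHomogeneous_X R j

theorem homogeneousComponent_aeval {σ τ R : Type*} [CommSemiring R] {w : σ → ℕ}
    {e : σ → MvPolynomial τ R} (he : ∀ i, (e i).IsHomogeneous (w i)) (m : ℕ)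
    (p : MvPolynomial σ R) :
    homogeneousComponent m (aeval e p) = aeval e (weightedHomogeneousComponent w m p) := by
  classical
  induction p using MvPolynomial.induction_on' with
  | monomial s a =>
    have hw : (monomial s a).IsWeightedHomogeneous w (Finsupp.weight w s) :=
      isWeightedHomogeneous_monomial _ _ _ rfl
    have hh : (aeval e (monomial s a)).IsHomogeneous (Finsupp.weight w s) := by
      rw [aeval_monomial, algebraMap_eq, Finsupp.weight_apply]
      refine (IsHomogeneous.prod _ _ _ fun i _ => ?_).C_mul a
      simpa [mul_comm] using (he i).pow (s i)
    rw [homogeneousComponent_of_mem hh, weightedHomogeneousComponent_of_mem hw]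
    split_ifs <;> simp
  | add p q hp hq => simp only [map_add, hp, hq]

/-- A homogeneous symmetric polynomial is a weighted homogeneous polynomial in the elementary
symmetric polynomials. -/
theorem IsSymmetric.exists_isWeightedHomogeneous_aeval_esymm {R : Type*} [CommRing R] {n m : ℕ}
    {f : MvPolynomial (Fin n) R} (hsym : f.IsSymmetric) (hhom : f.IsHomogeneous m) :
    ∃ g : MvPolynomial (Fin n) R, g.IsWeightedHomogeneous (fun i : Fin n => (i : ℕ) + 1) m ∧
      aeval (fun i : Fin n => esymm (Fin n) R (i + 1)) g = f := by
  obtain ⟨g, hg⟩ := esymmAlgHom_surjective (σ := Fin n) R (n := n) (by simp) ⟨f, hsym⟩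
  refine ⟨weightedHomogeneousComponent _ m g,
    weightedHomogeneousComponent_isWeightedHomogeneous _ _, ?_⟩
  rw [← homogeneousComponent_aeval fun i => isHomogeneous_esymm _ _ _, ← esymmAlgHom_apply, hg]
  exact homogeneousComponent_eq_self hhom

/-- A weighted homogeneous polynomial of degree less than `2 (k + 1)` is affine in the variables
of weight greater than `k`. -/
theorem IsWeightedHomogeneous.eval_add_add_eval_sub {R : Type*} [CommRing R] {n m k : ℕ}
    {g : MvPolynomial (Fin n) R}
    (hg : g.IsWeightedHomogeneous (fun i : Fin n => (i : ℕ) + 1) m) (hm : m < 2 * (k + 1))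
    {a c : Fin n → R} (hc : ∀ i : Fin n, (i : ℕ) < k → c i = 0) :
    eval (a + c) g + eval (a - c) g = 2 * eval a g := by
  simp only [eval_eq', ← sum_add_distrib, mul_sum]
  refine sum_congr rfl fun s hs => ?_
  have hw := hg (mem_support_iff.mp hs)
  rw [Finsupp.weight_apply, Finsupp.sum_fintype _ _ (by simp)] at hw
  simp only [smul_eq_mul] at hw
  by_cases h : ∃ j : Fin n, k ≤ (j : ℕ) ∧ s j ≠ 0
  · obtain ⟨j, hj, hsj⟩ := h
    rw [← add_sum_erase _ _ (mem_univ j)] at hw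
    have hj1 : s j = 1 := by
      by_contra h1
      have : 2 * (k + 1) ≤ s j * ((j : ℕ) + 1) := Nat.mul_le_mul (by lia) (by lia)
      lia
    have hother : ∀ i ∈ univ.erase j, s i = 0 ∨ c i = 0 := by
      intro i hi
      by_contra! h1
      have hik : k ≤ (i : ℕ) := by
        by_contra h2
        exact h1.2 (hc i (by lia))
      have h3 := single_le_sum (f := fun i : Fin n => s i * ((i : ℕ) + 1))
        (fun _ _ => Nat.zero_le _) hi
      have h4 : 1 * (k + 1) ≤ s i * ((i : ℕ) + 1) := Nat.mul_le_mul (by lia) (by lia)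
      lia
    have key : ∀ b : Fin n → R, (∀ i, c i = 0 → b i = a i) →
        ∏ i, b i ^ s i = b j * ∏ i ∈ univ.erase j, a i ^ s i := by
      intro b hb
      rw [← mul_prod_erase _ _ (mem_univ j), hj1, pow_one]
      congr 1
      refine prod_congr rfl fun i hi => ?_
      rcases hother i hi with h | h
      · simp [h]
      · rw [hb i h]
    rw [key (a + c) (by simp +contextual), key (a - c) (by simp +contextual),
      key a (by simp), Pi.add_apply, Pi.sub_apply]
    ring
  · push Not at h
    have key : ∀ b : Fin n → R, (∀ i, c i = 0 → b i = a i) →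
        ∏ i, b i ^ s i = ∏ i, a i ^ s i := by
      intro b hb
      refine prod_congr rfl fun i _ => ?_
      rcases lt_or_ge (i : ℕ) k with hi | hi
      · rw [hb i (hc i hi)]
      · simp [h i hi]
    rw [key (a + c) (by simp +contextual), key (a - c) (by simp +contextual)]
    ring

theorem eval_esymm_eq_coeff_nodal {R : Type*} [CommRing R] {n i : ℕ} (hi : i ≤ n)
    (x : Fin n → R) :
    eval x (esymm (Fin n) R i) = (-1) ^ i * (Lagrange.nodal univ x).coeff (n - i) := by
  have h := Multiset.prod_X_sub_C_coeff (univ.val.map x) (k := n - i) (by simp)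
  have hn : Lagrange.nodal univ x =
      ((univ.val.map x).map fun t => Polynomial.X - Polynomial.C t).prod := by
    rw [Lagrange.nodal_eq, Multiset.map_map]
    rfl
  rw [hn, h, ← coe_aeval_eq_eval]
  simp only [RingHom.coe_coe, aeval_esymm_eq_multiset_esymm, Multiset.card_map, card_val,
    card_univ, Fintype.card_fin, Nat.sub_sub_self hi]
  rw [← mul_assoc, ← mul_pow]
  simp

/-- A polynomial with simple real roots still has all its roots real after adding a small
constant. -/
theorem _root_.Lagrange.eventually_exists_nodal_eq_add_C {ι : Type*} {s : Finset ι}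
    {y : ι → ℝ} (hs : s.Nonempty) (hy : Set.InjOn y s) :
    ∀ᶠ ε in 𝓝 (0 : ℝ), ∃ z : ι → ℝ,
      Lagrange.nodal s z = Lagrange.nodal s y + Polynomial.C ε := by
  classical
  obtain ⟨U, hU, hdisj⟩ := (s.finite_toSet.image y).t2_separation
  have hroot : ∀ i ∈ s, ∀ᶠ ε in 𝓝 (0 : ℝ),
      ∃ t ∈ U (y i), (Lagrange.nodal s y).eval t = -ε := by
    intro i hi
    have hd := (Lagrange.nodal s y).hasStrictDerivAt (y i)
    rw [Lagrange.eval_nodal_derivative_eval_node_eq hi] at hd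
    have hne : (Lagrange.nodal (s.erase i) y).eval (y i) ≠ 0 :=
      Lagrange.eval_nodal_not_at_node fun j hj h =>
        (mem_erase.mp hj).1 (hy (mem_erase.mp hj).2 hi h.symm)
    have hmap := hd.map_nhds_eq hne
    have himg := image_mem_map (m := fun t => (Lagrange.nodal s y).eval t)
      ((hU (y i)).2.mem_nhds (hU (y i)).1)
    rw [hmap, Lagrange.eval_nodal_at_node hi] at himg
    have hneg : Tendsto (fun ε : ℝ => -ε) (𝓝 0) (𝓝 0) := by
      simpa using (continuous_neg (G := ℝ)).tendsto 0
    exact hneg himg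
  filter_upwards [(eventually_all_finset s).2 hroot] with ε hε
  choose! z hzU hz using hε
  have hinj : Set.InjOn z s := by
    intro i hi j hj hij
    by_contra hne
    have h := hdisj (Set.mem_image_of_mem y hi) (Set.mem_image_of_mem y hj)
      fun h => hne (hy hi hj h)
    exact Set.disjoint_left.mp h (hzU i hi) (hij ▸ hzU j hj)
  have hdeg : (Lagrange.nodal s y).degree = #s := Lagrange.degree_nodal
  have hmonic : (Lagrange.nodal s y + Polynomial.C ε).Monic :=
    Lagrange.nodal_monic.add_of_left (Polynomial.degree_C_le.trans_lt
      (by rw [hdeg]; exact_mod_cast hs.card_pos))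
  have hdeg' : (Lagrange.nodal s y + Polynomial.C ε).degree = #s := by
    rw [Polynomial.degree_add_C (by rw [hdeg]; exact_mod_cast hs.card_pos), hdeg]
  refine ⟨z, Polynomial.eq_of_degree_sub_lt_of_eval_index_eq s hinj ?_ fun i hi => ?_⟩
  · have hlt := Polynomial.degree_sub_lt_left (Lagrange.degree_nodal.trans hdeg'.symm)
      (Lagrange.nodal_ne_zero (s := s) (v := z))
      (Lagrange.nodal_monic.leadingCoeff.trans hmonic.leadingCoeff.symm)
    rwa [Lagrange.degree_nodal] at hlt
  · rw [Lagrange.eval_nodal_at_node hi, Polynomial.eval_add, Polynomial.eval_C, hz i hi,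
      neg_add_cancel]

/-- If `y` takes `k + 1` distinct values, it can be moved so that the elementary symmetric
polynomials move along a line, fixing the first `k` of them and changing the next one. -/
theorem exists_eventually_eval_esymm_eq_add_mul {n k : ℕ} {y : Fin n → ℝ} {s : Finset (Fin n)}
    (hs : #s = k + 1) (hy : Set.InjOn y s) :
    ∃ c : ℕ → ℝ, (∀ i ≤ k, c i = 0) ∧ c (k + 1) ≠ 0 ∧
      ∀ᶠ ε in 𝓝 (0 : ℝ), ∃ z : Fin n → ℝ, ∀ i ≤ n,
        eval z (esymm (Fin n) ℝ i) = eval y (esymm (Fin n) ℝ i) + ε * c i := by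
  have hn : k + 1 ≤ n := by simpa [hs] using card_le_univ s
  have hdeg : (Lagrange.nodal sᶜ y).natDegree = n - (k + 1) := by
    rw [Lagrange.natDegree_nodal, card_compl, hs, Fintype.card_fin]
  refine ⟨fun i => (-1) ^ i * (Lagrange.nodal sᶜ y).coeff (n - i), fun i hi => ?_, ?_, ?_⟩
  · simp only [mul_eq_zero]
    exact Or.inr (Polynomial.coeff_eq_zero_of_natDegree_lt (by lia))
  · have h := (Lagrange.nodal_monic (s := sᶜ) (v := y)).coeff_natDegree
    rw [hdeg] at h
    simp [h]
  · filter_upwards [Lagrange.eventually_exists_nodal_eq_add_C (card_pos.mp (by lia)) hy]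
      with ε ⟨z, hz⟩
    refine ⟨s.piecewise z y, fun i hi => ?_⟩
    have hsplit : ∀ x : Fin n → ℝ,
        Lagrange.nodal univ x = Lagrange.nodal s x * Lagrange.nodal sᶜ x := fun x => by
      simp only [Lagrange.nodal_eq, prod_mul_prod_compl]
    have h1 : Lagrange.nodal s (s.piecewise z y) = Lagrange.nodal s z :=
      prod_congr rfl fun j hj => by rw [piecewise_eq_of_mem _ _ _ hj]
    have h2 : Lagrange.nodal sᶜ (s.piecewise z y) = Lagrange.nodal sᶜ y :=
      prod_congr rfl fun j hj => by rw [piecewise_eq_of_notMem _ _ _ (mem_compl.mp hj)]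
    rw [eval_esymm_eq_coeff_nodal hi, eval_esymm_eq_coeff_nodal hi, hsplit, hsplit y, h1, h2, hz,
      add_mul, Polynomial.coeff_add, Polynomial.coeff_C_mul]
    ring

theorem isCompact_setOf_eval_esymm_eq {n k : ℕ} (hk : 2 ≤ k) (x : Fin n → ℝ) :
    IsCompact {y : Fin n → ℝ |
      ∀ i ≤ k, eval y (esymm (Fin n) ℝ i) = eval x (esymm (Fin n) ℝ i)} := by
  have hsq : ∀ y : Fin n → ℝ, ∑ j, y j ^ 2 =
      eval y (esymm (Fin n) ℝ 1) ^ 2 - 2 * eval y (esymm (Fin n) ℝ 2) := by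
    intro y
    have h := congrArg (eval y) (mul_esymm_eq_sum (Fin n) ℝ 2)
    have hf : {a ∈ antidiagonal 2 | a.1 < 2} = {(0, 2), (1, 1)} := by decide
    rw [hf] at h
    simp [psum, esymm_one] at h ⊢
    linarith
  refine Metric.isCompact_of_isClosed_isBounded ?_ ?_
  · simp only [Set.ofPred_forall]
    exact isClosed_iInter fun i => isClosed_iInter fun _ =>
      isClosed_eq (MvPolynomial.continuous_eval _) continuous_const
  · refine isBounded_iff_forall_norm_le.mpr ⟨√(∑ j, x j ^ 2), fun y hy => ?_⟩
    refine (pi_norm_le_iff_of_nonneg (Real.sqrt_nonneg _)).mpr fun i => ?_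
    rw [Real.norm_eq_abs]
    refine Real.abs_le_sqrt ?_
    rw [hsq x, ← hy 1 (by lia), ← hy 2 hk, ← hsq y]
    exact single_le_sum (f := fun j => y j ^ 2) (fun j _ => sq_nonneg _) (mem_univ i)

/-- Every value of a symmetric form of degree less than `2 (k + 1)` is bounded below by its value
at some point with at most `k` distinct coordinates. -/
theorem IsSymmetric.exists_card_image_le_eval_le {n m k : ℕ} {f : MvPolynomial (Fin n) ℝ}
    (hsym : f.IsSymmetric) (hhom : f.IsHomogeneous m) (hk : 2 ≤ k) (hm : m < 2 * (k + 1))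
    (x : Fin n → ℝ) :
    ∃ y : Fin n → ℝ, #(univ.image y) ≤ k ∧ eval y f ≤ eval x f := by
  set K := {y : Fin n → ℝ |
    ∀ i ≤ k, eval y (esymm (Fin n) ℝ i) = eval x (esymm (Fin n) ℝ i)}
  have hKc : IsCompact K := isCompact_setOf_eval_esymm_eq hk x
  have hxK : x ∈ K := fun _ _ => rfl
  obtain ⟨y₀, hy₀K, hy₀⟩ := hKc.exists_isMinOn ⟨x, hxK⟩ (continuous_eval f).continuousOn
  have hK'c : IsCompact (K ∩ {y | eval y f = eval y₀ f}) :=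
    hKc.inter_right (isClosed_eq (continuous_eval f) continuous_const)
  obtain ⟨y, ⟨hyK, hyf⟩, hy⟩ := hK'c.exists_isMinOn ⟨y₀, hy₀K, rfl⟩
    (continuous_eval (esymm (Fin n) ℝ (k + 1))).continuousOn
  simp only [Set.mem_ofPred_eq] at hyf
  refine ⟨y, ?_, hyf.trans_le (hy₀ hxK)⟩
  by_contra! hcard
  obtain ⟨t, hty, ht⟩ := exists_subset_card_eq (Nat.succ_le_of_lt hcard)
  obtain ⟨s, -, hs, hst⟩ := exists_subset_injOn_image_eq_of_surjOn (f := y) Set.univ t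
    fun v hv => by simpa using hty hv
  have hsc : #s = k + 1 := by
    rw [← card_image_of_injOn hs, hst, ht]
  have hn : k + 1 ≤ n := by simpa [hsc] using card_le_univ s
  obtain ⟨c, hc, hck, hev⟩ := exists_eventually_eval_esymm_eq_add_mul hsc hs
  have hneg : Tendsto (fun ε : ℝ => -ε) (𝓝 0) (𝓝 0) := by
    simpa using (continuous_neg (G := ℝ)).tendsto 0
  obtain ⟨ε, ⟨⟨z₁, hz₁⟩, z₂, hz₂⟩, hε⟩ :=
    (((hev.and (hneg.eventually hev)).filter_mono nhdsWithin_le_nhds).and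
      (self_mem_nhdsWithin : {(0 : ℝ)}ᶜ ∈ 𝓝[≠] 0)).exists
  obtain ⟨g, hg, rfl⟩ := hsym.exists_isWeightedHomogeneous_aeval_esymm hhom
  have heval : ∀ z : Fin n → ℝ, eval z (aeval (fun i : Fin n => esymm (Fin n) ℝ (i + 1)) g) =
      eval (fun i : Fin n => eval z (esymm (Fin n) ℝ (i + 1))) g := by
    intro z
    simp only [← coe_aeval_eq_eval, RingHom.coe_coe, comp_aeval_apply]
  have hmemK : ∀ (δ : ℝ) (z : Fin n → ℝ), (∀ i ≤ n, eval z (esymm (Fin n) ℝ i) =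
      eval y (esymm (Fin n) ℝ i) + δ * c i) → z ∈ K := by
    intro δ z hz i hi
    rw [hz i (by lia), hc i hi, mul_zero, add_zero, hyK i hi]
  have hmid := hg.eval_add_add_eval_sub hm
    (a := fun i : Fin n => eval y (esymm (Fin n) ℝ (i + 1)))
    (c := fun i : Fin n => ε * c (i + 1)) fun i hi => by rw [hc _ hi, mul_zero]
  have e₁ : (fun i : Fin n => eval y (esymm (Fin n) ℝ (i + 1))) +
      (fun i : Fin n => ε * c (i + 1)) = fun i : Fin n => eval z₁ (esymm (Fin n) ℝ (i + 1)) := by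
    ext i
    rw [hz₁ _ (by lia), Pi.add_apply]
  have e₂ : (fun i : Fin n => eval y (esymm (Fin n) ℝ (i + 1))) -
      (fun i : Fin n => ε * c (i + 1)) = fun i : Fin n => eval z₂ (esymm (Fin n) ℝ (i + 1)) := by
    ext i
    rw [hz₂ _ (by lia), Pi.sub_apply]
    ring
  rw [e₁, e₂, ← heval, ← heval, ← heval, hyf] at hmid
  have m₁ := hy₀ (hmemK _ _ hz₁)
  have m₂ := hy₀ (hmemK _ _ hz₂)
  simp only [Set.mem_ofPred_eq] at m₁ m₂
  have l₁ := hy ⟨hmemK _ _ hz₁, show _ = _ by linarith⟩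
  have l₂ := hy ⟨hmemK _ _ hz₂, show _ = _ by linarith⟩
  simp only [Set.mem_ofPred_eq, hz₁ _ hn, hz₂ _ hn] at l₁ l₂
  exact mul_ne_zero hε hck (by linarith)

end MvPolynomial

/-- **Half degree principle.** A symmetric form `f` of degree `2d` in `n` real
variables is nonnegative on `ℝ^n` if and only if it is nonnegative on the set
`A_k` of points with at most `k = max 2 d` distinct coordinates. -/
theorem half_degree_principle (n d : ℕ) (f : MvPolynomial (Fin n) ℝ)
    (hsym : f.IsSymmetric) (hhom : f.IsHomogeneous (2 * d)) :
    (∀ x : Fin n → ℝ, 0 ≤ eval x f) ↔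
    (∀ y : Fin n → ℝ, (Finset.univ.image y).card ≤ max 2 d → 0 ≤ eval y f) := by
  refine ⟨fun h y _ => h y, fun h x => ?_⟩
  obtain ⟨y, hyk, hyx⟩ :=
    hsym.exists_card_image_le_eval_le hhom (le_max_left 2 d) (by lia) x
  exact (h y hyk).trans hyx
end

section
/- Let d ≥ 2, n ≥ 2d, and let f = Σ_{λ⊢2d} c_λ p_λ^{(n)} be a symmetric form of degree 2d in n variables. Then f is nonnegative on ℝ^n if and only if for every w ∈ W_n the d-variate form t ↦ Φ_f(w, t) is nonnegative on ℝ^d, where W_n := {w ∈ ℝ^d : n·w_i ∈ ℕ∪{0} for all i and w_1 + ⋯ + w_d = 1}. -/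
open MvPolynomial

/-- `Φ_λ(s,t) = ∏_{i=1}^l (s_1 t_1^{λ_i} + ⋯ + s_d t_d^{λ_i})` for a partition
`λ = (λ_1,…,λ_l)` of `k`, as a function on `ℝ^d × ℝ^d`. -/
noncomputable def phiPart {k : ℕ} (d : ℕ) (lam : Nat.Partition k) (s t : Fin d → ℝ) : ℝ :=
  (lam.parts.map (fun i => ∑ j : Fin d, s j * t j ^ i)).prod

/-- `Φ_c = Σ_{λ ⊢ k} c_λ Φ_λ`. -/
noncomputable def phiForm {k : ℕ} (d : ℕ) (c : Nat.Partition k → ℝ) (s t : Fin d → ℝ) : ℝ :=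
  ∑ lam : Nat.Partition k, c lam * phiPart d lam s t

/-- Newton's identities, evaluated at a point. -/
theorem sum_pow_eq_newton {n : ℕ} (x : Fin n → ℝ) {k : ℕ} (hk : 0 < k) :
    ∑ j, x j ^ k = (-1) ^ (k + 1) * k * aeval x (esymm (Fin n) ℝ k) -
      ∑ a ∈ Finset.HasAntidiagonal.antidiagonal k with a.1 ∈ Set.Ioo 0 k,
        (-1) ^ a.1 * aeval x (esymm (Fin n) ℝ a.1) * ∑ j, x j ^ a.2 := by
  simpa [MvPolynomial.psum] using
    congrArg (aeval x) (MvPolynomial.psum_eq_mul_esymm_sub_sum (Fin n) ℝ k hk)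

theorem sum_pow_congr_of_esymm {n d : ℕ} {x y : Fin n → ℝ}
    (h : ∀ i ≤ d, aeval x (esymm (Fin n) ℝ i) = aeval y (esymm (Fin n) ℝ i)) :
    ∀ k ≤ d, ∑ j, x j ^ k = ∑ j, y j ^ k := by
  intro k
  induction k using Nat.strong_induction_on with
  | _ k ih =>
    intro hk
    rcases Nat.eq_zero_or_pos k with rfl | hpos
    · simp
    · rw [sum_pow_eq_newton x hpos, sum_pow_eq_newton y hpos, h k hk]
      congr 1
      refine Finset.sum_congr rfl fun a ha => ?_
      simp only [Finset.mem_filter, Finset.HasAntidiagonal.mem_antidiagonal, Set.mem_Ioo] at ha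
      rw [h a.1 (by omega), ih a.2 (by omega) (by omega)]

/-- If the elementary symmetric values at `x` are the averages of those at `y` and `z`, with equality
up to index `d`, then the power sums up to exponent `2 * d` at `x` are averages as well. -/
theorem sum_pow_midpoint_of_esymm {n d : ℕ} {x y z : Fin n → ℝ}
    (hy : ∀ i ≤ d, aeval x (esymm (Fin n) ℝ i) = aeval y (esymm (Fin n) ℝ i))
    (hz : ∀ i ≤ d, aeval x (esymm (Fin n) ℝ i) = aeval z (esymm (Fin n) ℝ i))
    (hm : ∀ i, 2 * aeval x (esymm (Fin n) ℝ i) =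
      aeval y (esymm (Fin n) ℝ i) + aeval z (esymm (Fin n) ℝ i)) :
    ∀ k ≤ 2 * d, 2 * ∑ j, x j ^ k = ∑ j, y j ^ k + ∑ j, z j ^ k := by
  have py := sum_pow_congr_of_esymm hy
  have pz := sum_pow_congr_of_esymm hz
  intro k
  induction k using Nat.strong_induction_on with
  | _ k ih =>
    intro hk
    rcases Nat.eq_zero_or_pos k with rfl | hpos
    · simp [two_mul]
    · rw [sum_pow_eq_newton x hpos, sum_pow_eq_newton y hpos, sum_pow_eq_newton z hpos]
      have key : 2 * ∑ a ∈ Finset.HasAntidiagonal.antidiagonal k with a.1 ∈ Set.Ioo 0 k,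
            (-1) ^ a.1 * aeval x (esymm (Fin n) ℝ a.1) * ∑ j, x j ^ a.2 =
          ∑ a ∈ Finset.HasAntidiagonal.antidiagonal k with a.1 ∈ Set.Ioo 0 k,
            (-1) ^ a.1 * aeval y (esymm (Fin n) ℝ a.1) * ∑ j, y j ^ a.2 +
          ∑ a ∈ Finset.HasAntidiagonal.antidiagonal k with a.1 ∈ Set.Ioo 0 k,
            (-1) ^ a.1 * aeval z (esymm (Fin n) ℝ a.1) * ∑ j, z j ^ a.2 := by
        rw [Finset.mul_sum, ← Finset.sum_add_distrib]
        refine Finset.sum_congr rfl fun a ha => ?_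
        simp only [Finset.mem_filter, Finset.HasAntidiagonal.mem_antidiagonal, Set.mem_Ioo] at ha
        by_cases had : a.1 ≤ d
        · rw [← hy a.1 had, ← hz a.1 had]
          linear_combination (-1) ^ a.1 * aeval x (esymm (Fin n) ℝ a.1) *
            ih a.2 (by omega) (by omega)
        · rw [← py a.2 (by omega), ← pz a.2 (by omega)]
          linear_combination (-1) ^ a.1 * (∑ j, x j ^ a.2) * hm a.1
      linear_combination (-1) ^ (k + 1) * k * hm k - key

theorem eval_pPart {n k : ℕ} (x : Fin n → ℝ) (lam : Nat.Partition k) :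
    eval x (pPart n lam) = (lam.parts.map fun i => (n : ℝ)⁻¹ * ∑ j, x j ^ i).prod := by
  rw [pPart, map_multiset_prod, Multiset.map_map]
  simp [Function.comp_def, _root_.psum]

theorem eval_symForm {n k : ℕ} (x : Fin n → ℝ) (c : Nat.Partition k → ℝ) :
    eval x (symForm n c) = ∑ lam, c lam * eval x (pPart n lam) := by
  simp [symForm]

theorem eval_pPart_midpoint {n d : ℕ} {x y z : Fin n → ℝ}
    (hy : ∀ k ≤ d, ∑ j, x j ^ k = ∑ j, y j ^ k) (hz : ∀ k ≤ d, ∑ j, x j ^ k = ∑ j, z j ^ k)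
    (hm : ∀ k ≤ 2 * d, 2 * ∑ j, x j ^ k = ∑ j, y j ^ k + ∑ j, z j ^ k)
    (lam : Nat.Partition (2 * d)) :
    2 * eval x (pPart n lam) = eval y (pPart n lam) + eval z (pPart n lam) := by
  simp only [eval_pPart]
  have hcongr : ∀ {u : Fin n → ℝ} {s : Multiset ℕ}, (∀ k ≤ d, ∑ j, x j ^ k = ∑ j, u j ^ k) →
      (∀ i ∈ s, i ≤ d) → (s.map fun i => (n : ℝ)⁻¹ * ∑ j, u j ^ i).prod =
        (s.map fun i => (n : ℝ)⁻¹ * ∑ j, x j ^ i).prod := fun hu hs =>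
    congrArg _ (Multiset.map_congr rfl fun i hi => by rw [hu i (hs i hi)])
  by_cases hall : ∀ i ∈ lam.parts, i ≤ d
  · rw [hcongr hy hall, hcongr hz hall, two_mul]
  · push Not at hall
    obtain ⟨i, hi, hid⟩ := hall
    obtain ⟨s, hs⟩ := Multiset.exists_cons_of_mem hi
    have hsum : i + s.sum = 2 * d := by rw [← Multiset.sum_cons, ← hs, lam.parts_sum]
    have hsd : ∀ j ∈ s, j ≤ d := fun j hj => by
      have := Multiset.le_sum_of_mem hj
      omega
    simp only [hs, Multiset.map_cons, Multiset.prod_cons]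
    rw [hcongr hy hsd, hcongr hz hsd]
    linear_combination (n : ℝ)⁻¹ * (s.map fun i => (n : ℝ)⁻¹ * ∑ j, x j ^ i).prod *
      hm i (by omega)

theorem eval_comp_symForm {n d k : ℕ} (σ : Fin n → Fin d) (t w : Fin d → ℝ)
    (hw : ∀ i, w i = (n : ℝ)⁻¹ * (Finset.univ.filter fun j => σ j = i).card)
    (c : Nat.Partition k → ℝ) :
    eval (t ∘ σ) (symForm n c) = phiForm d c w t := by
  rw [eval_symForm, phiForm]
  refine Finset.sum_congr rfl fun lam _ => ?_
  rw [eval_pPart, phiPart]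
  congr 3
  funext i
  rw [← Finset.sum_fiberwise Finset.univ σ, Finset.mul_sum]
  refine Finset.sum_congr rfl fun l _ => ?_
  rw [hw, Finset.sum_congr rfl (g := fun _ => t l ^ i) (by simp +contextual), Finset.sum_const,
    nsmul_eq_mul, mul_assoc]

theorem isCompact_sum_pow_fiber {n d : ℕ} (hd : 2 ≤ d) (x : Fin n → ℝ) :
    IsCompact {y : Fin n → ℝ | ∀ k ≤ d, ∑ j, x j ^ k = ∑ j, y j ^ k} := by
  refine IsCompact.of_isClosed_subset
    (isCompact_Icc (a := fun _ => -(∑ j, x j ^ 2 + 1)) (b := fun _ => ∑ j, x j ^ 2 + 1)) ?_ ?_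
  · simp only [Set.ofPred_forall]
    exact isClosed_iInter fun k => isClosed_iInter fun _ =>
      isClosed_eq continuous_const (by fun_prop)
  · intro y hy
    have hle : ∀ j, y j ^ 2 ≤ ∑ j, x j ^ 2 := fun j => by
      rw [hy 2 hd]
      exact Finset.single_le_sum (f := fun j => y j ^ 2) (fun i _ => sq_nonneg _) (Finset.mem_univ j)
    exact ⟨fun j => by nlinarith [hle j], fun j => by nlinarith [hle j]⟩

/-- A real polynomial with simple real roots stays real-rooted under small constant perturbations. -/
theorem eventually_exists_prod_X_sub_C_eq_sub_C (S : Finset ℝ) (hS : S.Nonempty) :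
    ∀ᶠ ε in nhds (0 : ℝ), ∃ r : ℝ → ℝ,
      ∏ a ∈ S, (Polynomial.X - Polynomial.C (r a)) =
        ∏ a ∈ S, (Polynomial.X - Polynomial.C a) - Polynomial.C ε := by
  set P : Polynomial ℝ := ∏ a ∈ S, (Polynomial.X - Polynomial.C a) with hP
  obtain ⟨U, hU, hdisj⟩ := S.finite_toSet.t2_separation
  have hroot : ∀ a ∈ S, P.eval a = 0 := fun a ha => by
    rw [hP, Polynomial.eval_prod]
    exact Finset.prod_eq_zero ha (by simp)
  have hder : ∀ a ∈ S, P.derivative.eval a ≠ 0 := fun a ha => by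
    have hsep : P.Separable := by
      rw [hP]
      exact Polynomial.separable_prod_X_sub_C_iff'.2 fun x _ y _ h => h
    have := hsep.eval₂_derivative_ne_zero (RingHom.id ℝ) (x := a)
      (by simpa [Polynomial.eval₂_id] using hroot a ha)
    simpa [Polynomial.eval₂_id] using this
  have hev : ∀ a ∈ S, ∀ᶠ ε in nhds (0 : ℝ), ∃ b ∈ U a, P.eval b = ε := fun a ha => by
    have hmap := (P.hasStrictDerivAt a).map_nhds_eq (hder a ha)
    rw [hroot a ha] at hmap
    rw [← hmap]
    filter_upwards [Filter.image_mem_map ((hU a).2.mem_nhds (hU a).1)] with ε hε using hε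
  filter_upwards [(Filter.eventually_all_finset S).2 hev] with ε hε
  choose! r hrU hr using hε
  refine ⟨r, Polynomial.eq_of_degree_sub_lt_of_eval_index_eq S (v := r) ?_ ?_ ?_⟩
  · intro a ha b hb hab
    by_contra hne
    exact Set.disjoint_left.1 (hdisj ha hb hne) (hrU a ha) (hab ▸ hrU b hb)
  · have hcard : ∀ g : ℝ → ℝ,
        (∏ a ∈ S, (Polynomial.X - Polynomial.C (g a))).degree = (S.card : WithBot ℕ) := fun g => by
      simp [Polynomial.degree_prod]
    have hPd : P.degree = (S.card : WithBot ℕ) := hcard fun a => a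
    have hεd : (Polynomial.C ε).degree < P.degree := by
      rw [hPd]
      exact Polynomial.degree_C_le.trans_lt (by exact_mod_cast hS.card_pos)
    have hPm : P.Monic := Polynomial.monic_prod_of_monic _ _ fun a _ => Polynomial.monic_X_sub_C a
    have hQm : (∏ a ∈ S, (Polynomial.X - Polynomial.C (r a))).Monic :=
      Polynomial.monic_prod_of_monic _ _ fun a _ => Polynomial.monic_X_sub_C (r a)
    rw [← hcard r]
    refine Polynomial.degree_sub_lt_left ?_ hQm.ne_zero ?_
    · rw [Polynomial.degree_sub_eq_left_of_degree_lt hεd, hcard, hPd]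
    · rw [hQm.leadingCoeff, (hPm.sub_of_left hεd).leadingCoeff]
  · intro a ha
    rw [Polynomial.eval_prod, Finset.prod_eq_zero ha (by simp)]
    simp [hr a ha]

theorem exists_fin_map_eq {α : Type*} {n : ℕ} (M : Multiset α) (hM : M.card = n) :
    ∃ y : Fin n → α, Finset.univ.val.map y = M := by
  obtain ⟨l, rfl⟩ := Quot.exists_rep M
  subst hM
  refine ⟨l.get, ?_⟩
  exact (Fin.univ_val_map l.get).trans (congrArg _ (List.ofFn_get l))

theorem coeff_prod_X_sub_C_eq_esymm {n : ℕ} (x : Fin n → ℝ) {k : ℕ} (hk : k ≤ n) :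
    (∏ j, (Polynomial.X - Polynomial.C (x j))).coeff (n - k) =
      (-1) ^ k * aeval x (esymm (Fin n) ℝ k) := by
  have h := Multiset.prod_X_sub_C_coeff (Finset.univ.val.map x) (k := n - k) (by simp)
  rw [Multiset.map_map, Multiset.card_map, Finset.card_val, Finset.card_univ, Fintype.card_fin,
    Nat.sub_sub_self hk, ← aeval_esymm_eq_multiset_esymm (Fin n) ℝ] at h
  exact h

theorem aeval_esymm_eq_coeff {n : ℕ} (x : Fin n → ℝ) {k : ℕ} (hk : k ≤ n) :
    aeval x (esymm (Fin n) ℝ k) =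
      (-1) ^ k * (∏ j, (Polynomial.X - Polynomial.C (x j))).coeff (n - k) := by
  rw [coeff_prod_X_sub_C_eq_esymm x hk, ← mul_assoc, ← mul_pow]
  simp

/-- A point with more than `d` distinct coordinates is, in elementary symmetric coordinates, the
midpoint of a nontrivial segment along which the first `d` coordinates are constant. -/
theorem exists_esymm_midpoint {n d : ℕ} (x : Fin n → ℝ)
    (hx : d < (Finset.univ.image x).card) :
    ∃ y z : Fin n → ℝ,
      (∀ i ≤ d, aeval x (esymm (Fin n) ℝ i) = aeval y (esymm (Fin n) ℝ i)) ∧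
      (∀ i ≤ d, aeval x (esymm (Fin n) ℝ i) = aeval z (esymm (Fin n) ℝ i)) ∧
      (∀ i, 2 * aeval x (esymm (Fin n) ℝ i) =
        aeval y (esymm (Fin n) ℝ i) + aeval z (esymm (Fin n) ℝ i)) ∧
      ∃ i ≤ n, aeval y (esymm (Fin n) ℝ i) ≠ aeval z (esymm (Fin n) ℝ i) := by
  set S := Finset.univ.image x with hS
  have hSn : S.card ≤ n := by simpa using Finset.card_image_le (s := Finset.univ) (f := x)
  obtain ⟨T, hT⟩ : ∃ T, Finset.univ.val.map x = S.val + T :=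
    Multiset.le_iff_exists_add.1 (Multiset.dedup_le (Finset.univ.val.map x))
  have hTcard : T.card = n - S.card := by
    have := congrArg Multiset.card hT
    simp at this
    omega
  set R : Polynomial ℝ := (T.map fun a => Polynomial.X - Polynomial.C a).prod with hR
  have hRmonic : R.Monic := Polynomial.monic_multiset_prod_of_monic _ _ fun a _ =>
    Polynomial.monic_X_sub_C a
  have hRdeg : R.natDegree = n - S.card := by
    rw [hR, Polynomial.natDegree_multiset_prod_X_sub_C_eq_card, hTcard]
  have hF : ∏ j, (Polynomial.X - Polynomial.C (x j)) =
      (∏ a ∈ S, (Polynomial.X - Polynomial.C a)) * R := by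
    have := congrArg (fun M => (M.map fun a : ℝ => Polynomial.X - Polynomial.C a).prod) hT
    simp only [Multiset.map_add, Multiset.prod_add, Multiset.map_map] at this
    exact this
  have hex : ∀ᶠ ε in nhds (0 : ℝ), ∃ y : Fin n → ℝ,
      ∏ j, (Polynomial.X - Polynomial.C (y j)) =
        ∏ j, (Polynomial.X - Polynomial.C (x j)) - Polynomial.C ε * R := by
    filter_upwards [eventually_exists_prod_X_sub_C_eq_sub_C S (Finset.card_pos.1 (by omega))]
      with ε ⟨r, hr⟩
    obtain ⟨y, hy⟩ := exists_fin_map_eq (n := n) (S.val.map r + T) (by simp [hTcard]; omega)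
    refine ⟨y, ?_⟩
    have := congrArg (fun M => (M.map fun a : ℝ => Polynomial.X - Polynomial.C a).prod) hy
    simp only [Multiset.map_add, Multiset.prod_add, Multiset.map_map] at this
    rw [hF, ← sub_mul, ← hr]
    exact this
  have hneg : ∀ᶠ ε in nhds (0 : ℝ), ∃ y : Fin n → ℝ,
      ∏ j, (Polynomial.X - Polynomial.C (y j)) =
        ∏ j, (Polynomial.X - Polynomial.C (x j)) - Polynomial.C (-ε) * R :=
    (continuous_neg.tendsto' (0 : ℝ) 0 neg_zero).eventually hex
  obtain ⟨ε, ⟨⟨y, hy⟩, z, hz⟩, hε⟩ :=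
    (((hex.and hneg).filter_mono nhdsWithin_le_nhds).and
      (self_mem_nhdsWithin : Set.Ioi (0 : ℝ) ∈ nhdsWithin 0 (Set.Ioi 0))).exists
  replace hε : 0 < ε := hε
  have hey : ∀ i ≤ n, aeval y (esymm (Fin n) ℝ i) =
      aeval x (esymm (Fin n) ℝ i) - (-1) ^ i * (ε * R.coeff (n - i)) := fun i hi => by
    rw [aeval_esymm_eq_coeff y hi, aeval_esymm_eq_coeff x hi, hy, Polynomial.coeff_sub,
      Polynomial.coeff_C_mul, mul_sub]
  have hez : ∀ i ≤ n, aeval z (esymm (Fin n) ℝ i) =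
      aeval x (esymm (Fin n) ℝ i) + (-1) ^ i * (ε * R.coeff (n - i)) := fun i hi => by
    rw [aeval_esymm_eq_coeff z hi, aeval_esymm_eq_coeff x hi, hz, Polynomial.coeff_sub,
      Polynomial.coeff_C_mul]
    ring
  have hcoeff : ∀ i ≤ d, R.coeff (n - i) = 0 := fun i hi =>
    Polynomial.coeff_eq_zero_of_natDegree_lt (by omega)
  refine ⟨y, z, fun i hi => ?_, fun i hi => ?_, fun i => ?_, S.card, hSn, ?_⟩
  · rw [hey i (by omega), hcoeff i hi]
    simp
  · rw [hez i (by omega), hcoeff i hi]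
    simp
  · rcases le_or_gt i n with hi | hi
    · rw [hey i hi, hez i hi]
      ring
    · have h0 : esymm (Fin n) ℝ i = 0 := by
        rw [esymm, Finset.powersetCard_eq_empty.2 (by simpa using hi), Finset.sum_empty]
      simp [h0]
  · have hlead : R.coeff (n - S.card) = 1 := by
      rw [← hRdeg]
      exact hRmonic.coeff_natDegree
    rw [hey _ hSn, hez _ hSn, hlead]
    intro h
    have h2 : (-1 : ℝ) ^ S.card * ε = 0 := by linear_combination -h / 2
    rcases mul_eq_zero.1 h2 with h3 | h3
    · exact pow_ne_zero _ (by norm_num) h3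
    · exact hε.ne' h3

/-- The half-degree principle: a symmetric form of degree `2 * d` attains a value at most its value
at `x` at some point with at most `d` distinct coordinates. -/
theorem exists_card_image_le_eval_symForm_le {n d : ℕ} (hd : 2 ≤ d)
    (c : Nat.Partition (2 * d) → ℝ) (x : Fin n → ℝ) :
    ∃ m : Fin n → ℝ, (Finset.univ.image m).card ≤ d ∧
      eval m (symForm n c) ≤ eval x (symForm n c) := by
  set f : (Fin n → ℝ) → ℝ := fun y => eval y (symForm n c) with hf
  have hfc : Continuous f := MvPolynomial.continuous_eval _
  set N : (Fin n → ℝ) → ℝ :=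
    fun y => ∑ k ∈ Finset.range (n + 1), aeval y (esymm (Fin n) ℝ k) ^ 2 with hN
  have hNc : Continuous N := by
    refine continuous_finsetSum _ fun k _ => Continuous.pow ?_ 2
    simpa [aeval_eq_eval] using MvPolynomial.continuous_eval (esymm (Fin n) ℝ k)
  set K := {y : Fin n → ℝ | ∀ k ≤ d, ∑ j, x j ^ k = ∑ j, y j ^ k} with hK
  have hKc : IsCompact K := isCompact_sum_pow_fiber hd x
  have hxK : x ∈ K := fun _ _ => rfl
  obtain ⟨u, huK, hu⟩ := hKc.exists_isMinOn ⟨x, hxK⟩ hfc.continuousOn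
  obtain ⟨m, ⟨hmK, hmu⟩, hm⟩ := (hKc.inter_right (isClosed_le hfc continuous_const)
    (s := K) (t := {y | f y ≤ f u})).exists_isMaxOn ⟨u, huK, le_refl (f u)⟩ hNc.continuousOn
  refine ⟨m, ?_, le_trans hmu (hu hxK)⟩
  by_contra! hcard
  obtain ⟨y, z, hy, hz, hyz, i, hi, hne⟩ := exists_esymm_midpoint m hcard
  have py := sum_pow_congr_of_esymm hy
  have pz := sum_pow_congr_of_esymm hz
  have hyK : y ∈ K := fun k hk => (hmK k hk).trans (py k hk)
  have hzK : z ∈ K := fun k hk => (hmK k hk).trans (pz k hk)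
  have hfm : 2 * f m = f y + f z := by
    simp only [hf, eval_symForm, Finset.mul_sum, ← Finset.sum_add_distrib]
    refine Finset.sum_congr rfl fun lam _ => ?_
    linear_combination c lam *
      eval_pPart_midpoint py pz (sum_pow_midpoint_of_esymm hy hz hyz) lam
  have hfy : f u ≤ f y := hu hyK
  have hfz : f u ≤ f z := hu hzK
  have hmu' : f m ≤ f u := hmu
  have hNy : N y ≤ N m := hm ⟨hyK, show f y ≤ f u by linarith⟩
  have hNz : N z ≤ N m := hm ⟨hzK, show f z ≤ f u by linarith⟩
  have hlt : 2 * N m < N y + N z := by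
    simp only [hN, Finset.mul_sum, ← Finset.sum_add_distrib]
    refine Finset.sum_lt_sum (fun k _ => ?_) ⟨i, Finset.mem_range.2 (by omega), ?_⟩
    · rw [show aeval m (esymm (Fin n) ℝ k) =
        (aeval y (esymm (Fin n) ℝ k) + aeval z (esymm (Fin n) ℝ k)) / 2 by linarith [hyz k]]
      nlinarith [sq_nonneg (aeval y (esymm (Fin n) ℝ k) - aeval z (esymm (Fin n) ℝ k))]
    · have := pow_pos (abs_pos.2 (sub_ne_zero.2 hne)) 2
      rw [sq_abs] at this
      rw [show aeval m (esymm (Fin n) ℝ i) =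
        (aeval y (esymm (Fin n) ℝ i) + aeval z (esymm (Fin n) ℝ i)) / 2 by linarith [hyz i]]
      nlinarith
  linarith

theorem exists_comp_eq_of_card_image_le {n d : ℕ} (m : Fin n → ℝ)
    (h : (Finset.univ.image m).card ≤ d) :
    ∃ (σ : Fin n → Fin d) (t : Fin d → ℝ), t ∘ σ = m := by
  obtain ⟨e⟩ : Nonempty (Finset.univ.image m ↪ Fin d) :=
    Function.Embedding.nonempty_of_card_le (by simpa using h)
  refine ⟨fun j => e ⟨m j, by simp⟩, Function.extend e Subtype.val 0, ?_⟩
  funext j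
  simp [e.injective.extend_apply]

theorem exists_card_fiber_eq {n d : ℕ} (a : Fin d → ℕ) (ha : ∑ i, a i = n) :
    ∃ σ : Fin n → Fin d, ∀ i, (Finset.univ.filter fun j => σ j = i).card = a i := by
  subst ha
  refine ⟨fun j => (finSigmaFinEquiv.symm j).1, fun i => ?_⟩
  rw [← Fintype.card_subtype]
  calc Fintype.card {j // (finSigmaFinEquiv.symm j).1 = i}
      = Fintype.card {p : (i : Fin d) × Fin (a i) // p.1 = i} :=
        Fintype.card_congr (finSigmaFinEquiv.symm.subtypeEquiv fun _ => Iff.rfl)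
    _ = Fintype.card (Fin (a i)) := Fintype.card_congr (Equiv.sigmaSubtype i)
    _ = a i := Fintype.card_fin _

/-- For `d ≥ 2` and `n ≥ 2d`, the symmetric form `f = Σ_{λ⊢2d} c_λ p_λ^{(n)}`
is nonnegative on `ℝ^n` if and only if for every `w ∈ W_n` (vectors with
`n·w_i ∈ ℕ ∪ {0}` summing to `1`) the `d`-variate form `t ↦ Φ_f(w,t)` is
nonnegative on `ℝ^d`. -/
theorem nonneg_iff_phi_on_Wn (d n : ℕ) (hd : 2 ≤ d) (hn : 2 * d ≤ n)
    (c : Nat.Partition (2 * d) → ℝ) :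
    (∀ x : Fin n → ℝ, 0 ≤ eval x (symForm n c)) ↔
    (∀ w : Fin d → ℝ,
      ((∀ i : Fin d, ∃ m : ℕ, (n : ℝ) * w i = (m : ℝ)) ∧ ∑ i : Fin d, w i = 1) →
        ∀ t : Fin d → ℝ, 0 ≤ phiForm d c w t) := by
  have hn0 : (n : ℝ) ≠ 0 := Nat.cast_ne_zero.2 (by omega)
  constructor
  · rintro hf w ⟨hw, hw1⟩ t
    choose a ha using hw
    have hsum : ∑ i, a i = n := by
      have : ((∑ i, a i : ℕ) : ℝ) = n := by
        rw [Nat.cast_sum, ← Finset.sum_congr rfl fun i _ => ha i, ← Finset.mul_sum, hw1, mul_one]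
      exact_mod_cast this
    obtain ⟨σ, hσ⟩ := exists_card_fiber_eq a hsum
    rw [← eval_comp_symForm σ t w (fun i => by rw [hσ, ← ha, inv_mul_cancel_left₀ hn0]) c]
    exact hf _
  · intro h x
    obtain ⟨m, hm, hmx⟩ := exists_card_image_le_eval_symForm_le hd c x
    obtain ⟨σ, t, rfl⟩ := exists_comp_eq_of_card_image_le m hm
    refine le_trans ?_ hmx
    rw [eval_comp_symForm σ t _ (fun i => rfl) c]
    refine h _ ⟨fun i => ⟨_, mul_inv_cancel_left₀ hn0 _⟩, ?_⟩ t
    rw [← Finset.mul_sum, ← Nat.cast_sum,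
      ← Finset.card_eq_sum_card_fiberwise fun j _ => Finset.mem_univ (σ j)]
    simp [hn0]
end

section
/- Let n ≥ 4 and let f be a symmetric quartic form in n variables that is a sum of squares of polynomials. Then there exist real numbers α_{11}, α_{12}, α_{22}, β_{11}, β_{12}, β_{22}, γ such that γ ≥ 0, the 2×2 matrices [[α_{11}, α_{12}],[α_{12}, α_{22}]] and [[β_{11}, β_{12}],[β_{12}, β_{22}]] are positive semidefinite, and f = α_{11} p_{(1,1,1,1)} + 2α_{12} p_{(2,1,1)} + α_{22} p_{(2,2)} + β_{11}(p_{(2,1,1)} − p_{(1,1,1,1)}) + 2β_{12}(p_{(3,1)} − p_{(2,1,1)}) + β_{22}(p_{(4)} − p_{(2,2)}) + γ((1/2) p_{(1,1,1,1)} − p_{(2,1,1)} + ((n^2−3n+3)/(2n^2)) p_{(2,2)} + ((2n−2)/n^2) p_{(3,1)} + ((1−n)/(2n^2)) p_{(4)}), where all p_λ = p_λ^{(n)}. -/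
open MvPolynomial

theorem sum_perm_mul_apply {ι : Type*} [Fintype ι] [DecidableEq ι] (G : Equiv.Perm ι → ℝ)
    (S : Finset ι) (hG : ∀ τ : Equiv.Perm ι, (∀ s ∈ S, τ s = s) → ∀ σ, G (σ * τ) = G σ)
    (b : ι → ℝ) {l : ι} (hl : l ∉ S) :
    ((Fintype.card ι : ℝ) - S.card) * ∑ σ : Equiv.Perm ι, G σ * b (σ l) =
      ∑ σ : Equiv.Perm ι, G σ * (∑ j, b j - ∑ s ∈ S, b (σ s)) := by
  have key : ∀ k ∈ Sᶜ, ∑ σ : Equiv.Perm ι, G σ * b (σ k) =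
      ∑ σ : Equiv.Perm ι, G σ * b (σ l) := by
    intro k hk
    rw [Finset.mem_compl] at hk
    rw [← Equiv.sum_comp (Equiv.mulRight (Equiv.swap l k))
      (fun σ : Equiv.Perm ι => G σ * b (σ k))]
    refine Finset.sum_congr rfl fun σ _ => ?_
    simp only [Equiv.coe_mulRight, Equiv.Perm.mul_apply, Equiv.swap_apply_right]
    rw [hG]
    intro s hs
    exact Equiv.swap_apply_of_ne_of_ne (by rintro rfl; exact hl hs) (by rintro rfl; exact hk hs)
  have hsum := Finset.sum_congr rfl key
  rw [Finset.sum_const, Finset.card_compl, nsmul_eq_mul,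
    Nat.cast_sub (Finset.card_le_univ S)] at hsum
  rw [← hsum, Finset.sum_comm]
  refine Finset.sum_congr rfl fun σ _ => ?_
  rw [← Finset.mul_sum, ← Equiv.sum_comp σ b, ← Finset.sum_add_sum_compl S, add_sub_cancel_left]

section Moments
variable {ι : Type*} [Fintype ι] [DecidableEq ι]

theorem sum_perm_apply (a : ι → ℝ) (i : ι) :
    (Fintype.card ι : ℝ) * ∑ σ : Equiv.Perm ι, a (σ i) =
      Fintype.card (Equiv.Perm ι) * ∑ j, a j := by
  have h := sum_perm_mul_apply (fun _ => 1) ∅ (fun _ _ _ => rfl) a (Finset.notMem_empty i)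
  simpa using h

theorem sum_perm_apply₂ (a b : ι → ℝ) {i j : ι} (hij : i ≠ j) :
    (Fintype.card ι : ℝ) * (Fintype.card ι - 1) * ∑ σ : Equiv.Perm ι, a (σ i) * b (σ j) =
      Fintype.card (Equiv.Perm ι) * ((∑ k, a k) * ∑ k, b k - ∑ k, a k * b k) := by
  have h := sum_perm_mul_apply (fun σ => a (σ i)) {i}
    (fun τ hτ σ => by simp [hτ i (by simp)]) b (l := j) (by simpa using hij.symm)
  have h₁ := sum_perm_apply a i
  have h₂ := sum_perm_apply (fun k => a k * b k) i
  simp only [Finset.sum_singleton, Finset.card_singleton, mul_sub, Finset.sum_sub_distrib,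
    ← Finset.sum_mul, Nat.cast_one] at h
  linear_combination (Fintype.card ι : ℝ) * h + (∑ k, b k) * h₁ - h₂

theorem sum_perm_apply₃ (a b c : ι → ℝ) {i j k : ι} (hij : i ≠ j) (hik : i ≠ k) (hjk : j ≠ k) :
    (Fintype.card ι : ℝ) * (Fintype.card ι - 1) * (Fintype.card ι - 2) *
        ∑ σ : Equiv.Perm ι, a (σ i) * b (σ j) * c (σ k) =
      Fintype.card (Equiv.Perm ι) * ((∑ k, a k) * (∑ k, b k) * ∑ k, c k
        - (∑ k, a k * b k) * ∑ k, c k - (∑ k, a k * c k) * ∑ k, b k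
        - (∑ k, a k) * ∑ k, b k * c k + 2 * ∑ k, a k * b k * c k) := by
  have h := sum_perm_mul_apply (fun σ => a (σ i) * b (σ j)) {i, j}
    (fun τ hτ σ => by simp [hτ i (by simp), hτ j (by simp)]) c (l := k)
    (by simp [hik.symm, hjk.symm])
  have h₁ := sum_perm_apply₂ a b hij
  have h₂ := sum_perm_apply₂ (fun k => a k * c k) b hij
  have h₃ := sum_perm_apply₂ a (fun k => b k * c k) hij
  have e (σ : Equiv.Perm ι) : a (σ i) * b (σ j) * (∑ m, c m - ∑ s ∈ ({i, j} : Finset ι), c (σ s)) =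
      a (σ i) * b (σ j) * ∑ m, c m - a (σ i) * c (σ i) * b (σ j)
        - a (σ i) * (b (σ j) * c (σ j)) := by
    rw [Finset.sum_pair hij]
    ring
  have e₂ (m : ι) : a m * c m * b m = a m * b m * c m := by ring
  have e₃ (m : ι) : a m * (b m * c m) = a m * b m * c m := by ring
  simp only [e, Finset.card_pair hij, Finset.sum_sub_distrib, ← Finset.sum_mul,
    Nat.cast_ofNat] at h
  simp only [e₂, e₃] at h₂ h₃
  linear_combination (Fintype.card ι : ℝ) * (Fintype.card ι - 1) * h + (∑ k, c k) * h₁ - h₂ - h₃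

theorem sum_perm_apply₄ (x : ι → ℝ) {i j k l : ι} (hij : i ≠ j) (hik : i ≠ k) (hil : i ≠ l)
    (hjk : j ≠ k) (hjl : j ≠ l) (hkl : k ≠ l) :
    (Fintype.card ι : ℝ) * (Fintype.card ι - 1) * (Fintype.card ι - 2) * (Fintype.card ι - 3) *
        ∑ σ : Equiv.Perm ι, x (σ i) * x (σ j) * x (σ k) * x (σ l) =
      Fintype.card (Equiv.Perm ι) * ((∑ k, x k) ^ 4 - 6 * (∑ k, x k) ^ 2 * (∑ k, x k ^ 2)
        + 8 * (∑ k, x k) * (∑ k, x k ^ 3) + 3 * (∑ k, x k ^ 2) ^ 2 - 6 * ∑ k, x k ^ 4) := by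
  have hc : Finset.card {i, j, k} = 3 := Finset.card_eq_three.2 ⟨i, j, k, hij, hik, hjk, rfl⟩
  have h := sum_perm_mul_apply (fun σ => x (σ i) * x (σ j) * x (σ k)) {i, j, k}
    (fun τ hτ σ => by simp [hτ i (by simp), hτ j (by simp), hτ k (by simp)]) x (l := l)
    (by simp [hil.symm, hjl.symm, hkl.symm])
  have h₀ := sum_perm_apply₃ x x x hij hik hjk
  have h₁ := sum_perm_apply₃ (fun k => x k ^ 2) x x hij hik hjk
  have h₂ := sum_perm_apply₃ x (fun k => x k ^ 2) x hij hik hjk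
  have h₃ := sum_perm_apply₃ x x (fun k => x k ^ 2) hij hik hjk
  rw [hc] at h
  have e (σ : Equiv.Perm ι) : x (σ i) * x (σ j) * x (σ k) *
      (∑ m, x m - ∑ s ∈ ({i, j, k} : Finset ι), x (σ s)) =
      x (σ i) * x (σ j) * x (σ k) * ∑ m, x m - x (σ i) ^ 2 * x (σ j) * x (σ k)
        - x (σ i) * x (σ j) ^ 2 * x (σ k) - x (σ i) * x (σ j) * x (σ k) ^ 2 := by
    rw [Finset.sum_insert (by simp [hij, hik]), Finset.sum_pair hjk]
    ring
  simp only [e, Finset.sum_sub_distrib, ← Finset.sum_mul, Nat.cast_ofNat] at h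
  have e₂ (m : ι) : x m * x m = x m ^ 2 := by ring
  have e₃ (m : ι) : x m ^ 2 * x m = x m ^ 3 := by ring
  have e₃' (m : ι) : x m * x m ^ 2 = x m ^ 3 := by ring
  have e₄ (m : ι) : x m ^ 3 * x m = x m ^ 4 := by ring
  have e₄' (m : ι) : x m ^ 2 * x m ^ 2 = x m ^ 4 := by ring
  simp only [e₂, e₃, e₃', e₄, e₄'] at h₀ h₁ h₂ h₃
  linear_combination (Fintype.card ι : ℝ) * (Fintype.card ι - 1) * (Fintype.card ι - 2) * h
    + (∑ k, x k) * h₀ - h₁ - h₂ - h₃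

theorem sum_perm_linear {w : ι → ℝ} (hw : ∑ i, w i = 0) (a : ι → ℝ) :
    ∑ σ : Equiv.Perm ι, ∑ i, w i * a (σ i) = 0 := by
  rcases isEmpty_or_nonempty ι with h | h
  · simp
  have hn : (Fintype.card ι : ℝ) ≠ 0 := Nat.cast_ne_zero.2 Fintype.card_ne_zero
  refine (mul_eq_zero.1 ?_).resolve_left hn
  rw [Finset.sum_comm]
  simp only [← Finset.mul_sum]
  rw [Finset.mul_sum]
  simp only [mul_left_comm _ (w _), sum_perm_apply a, ← Finset.sum_mul, hw, zero_mul]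

theorem sum_perm_linear_mul_linear (w : ι → ℝ) {z : ι → ℝ} (hz : ∑ i, z i = 0) (a b : ι → ℝ) :
    (Fintype.card ι : ℝ) * (Fintype.card ι - 1) *
        ∑ σ : Equiv.Perm ι, (∑ i, w i * a (σ i)) * ∑ j, z j * b (σ j) =
      Fintype.card (Equiv.Perm ι) *
        (Fintype.card ι * ∑ k, a k * b k - (∑ k, a k) * ∑ k, b k) * ∑ i, w i * z i := by
  set D : ℝ := Fintype.card (Equiv.Perm ι) * ((∑ k, a k) * ∑ k, b k - ∑ k, a k * b k) with hD
  set E : ℝ := Fintype.card (Equiv.Perm ι) *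
    (Fintype.card ι * ∑ k, a k * b k - (∑ k, a k) * ∑ k, b k) with hE
  have key (i j : ι) : (Fintype.card ι : ℝ) * (Fintype.card ι - 1) *
      ∑ σ : Equiv.Perm ι, (w i * a (σ i)) * (z j * b (σ j)) =
      w i * (z j * (D + if i = j then E else 0)) := by
    have h₀ : ∑ σ : Equiv.Perm ι, (w i * a (σ i)) * (z j * b (σ j)) =
        w i * (z j * ∑ σ : Equiv.Perm ι, a (σ i) * b (σ j)) := by
      simp only [Finset.mul_sum]
      exact Finset.sum_congr rfl fun σ _ => by ring
    rw [h₀]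
    split_ifs with hij
    · subst hij
      linear_combination w i * z i * (Fintype.card ι - 1) * sum_perm_apply (fun k => a k * b k) i
    · linear_combination w i * z j * sum_perm_apply₂ a b hij
  simp only [Finset.sum_mul_sum]
  rw [Finset.sum_comm, Finset.mul_sum, Finset.mul_sum]
  refine Finset.sum_congr rfl fun i _ => ?_
  rw [Finset.sum_comm, Finset.mul_sum]
  simp only [key, mul_add, Finset.sum_add_distrib, mul_ite, mul_zero, Finset.sum_ite_eq,
    Finset.mem_univ, if_true, ← Finset.mul_sum, ← Finset.sum_mul, hz]
  ring

section Traceless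
variable {R : ι → ι → ℝ}

theorem sum_perm_quadratic (hR : ∀ i, R i i = 0) (hrow : ∀ i, ∑ j, R i j = 0)
    (hn : 2 ≤ Fintype.card ι) (x : ι → ℝ) :
    ∑ σ : Equiv.Perm ι, ∑ i, ∑ j, R i j * (x (σ i) * x (σ j)) = 0 := by
  have hn' : (2 : ℝ) ≤ Fintype.card ι := by exact_mod_cast hn
  have hK : (Fintype.card ι : ℝ) * (Fintype.card ι - 1) ≠ 0 :=
    mul_ne_zero (by linarith) (by linarith)
  refine (mul_eq_zero.1 ?_).resolve_left hK
  have key (i j : ι) : (Fintype.card ι : ℝ) * (Fintype.card ι - 1) *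
      ∑ σ : Equiv.Perm ι, R i j * (x (σ i) * x (σ j)) =
      R i j * (Fintype.card (Equiv.Perm ι) * ((∑ k, x k) * ∑ k, x k - ∑ k, x k * x k)) := by
    rw [← Finset.mul_sum]
    by_cases hij : i = j
    · subst hij
      simp [hR]
    · linear_combination R i j * sum_perm_apply₂ x x hij
  rw [Finset.sum_comm, Finset.mul_sum]
  refine Finset.sum_eq_zero fun i _ => ?_
  rw [Finset.sum_comm, Finset.mul_sum]
  simp only [key, ← Finset.sum_mul, hrow, zero_mul]

theorem sum_perm_linear_mul_quadratic (hsymm : ∀ i j, R i j = R j i) (hR : ∀ i, R i i = 0)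
    (hrow : ∀ i, ∑ j, R i j = 0) (hn : 3 ≤ Fintype.card ι) (w a x : ι → ℝ) :
    ∑ σ : Equiv.Perm ι, (∑ i, w i * a (σ i)) * ∑ j, ∑ k, R j k * (x (σ j) * x (σ k)) = 0 := by
  have hn' : (3 : ℝ) ≤ Fintype.card ι := by exact_mod_cast hn
  have hK : (Fintype.card ι : ℝ) * (Fintype.card ι - 1) * (Fintype.card ι - 2) ≠ 0 :=
    mul_ne_zero (mul_ne_zero (by linarith) (by linarith)) (by linarith)
  have hcol (j : ι) : ∑ i, R i j = 0 := by simpa only [hsymm j] using hrow j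
  refine (mul_eq_zero.1 ?_).resolve_left hK
  obtain ⟨D, E, hDE⟩ : ∃ D E : ℝ, ∀ i j k : ι,
      (Fintype.card ι : ℝ) * (Fintype.card ι - 1) * (Fintype.card ι - 2) *
        ∑ σ : Equiv.Perm ι, w i * a (σ i) * (R j k * (x (σ j) * x (σ k))) =
      w i * (R j k * (D + (if i = j then E else 0) + if i = k then E else 0)) := by
    refine ⟨Fintype.card (Equiv.Perm ι) * ((∑ k, a k) * (∑ k, x k) * ∑ k, x k
        - (∑ k, a k * x k) * ∑ k, x k - (∑ k, a k * x k) * ∑ k, x k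
        - (∑ k, a k) * ∑ k, x k * x k + 2 * ∑ k, a k * x k * x k),
      (Fintype.card ι - 2) * (Fintype.card (Equiv.Perm ι) * ((∑ k, a k * x k) * ∑ k, x k
        - ∑ k, a k * x k * x k)) - Fintype.card (Equiv.Perm ι) * ((∑ k, a k) * (∑ k, x k) * ∑ k, x k
        - (∑ k, a k * x k) * ∑ k, x k - (∑ k, a k * x k) * ∑ k, x k
        - (∑ k, a k) * ∑ k, x k * x k + 2 * ∑ k, a k * x k * x k), fun i j k => ?_⟩
    have h₀ : ∑ σ : Equiv.Perm ι, w i * a (σ i) * (R j k * (x (σ j) * x (σ k))) =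
        w i * (R j k * ∑ σ : Equiv.Perm ι, a (σ i) * x (σ j) * x (σ k)) := by
      simp only [Finset.mul_sum]
      exact Finset.sum_congr rfl fun σ _ => by ring
    rw [h₀]
    by_cases hjk : j = k
    · subst hjk
      simp [hR]
    by_cases hij : i = j
    · subst hij
      rw [if_pos rfl, if_neg hjk]
      linear_combination w i * R i k * (Fintype.card ι - 2) *
        sum_perm_apply₂ (fun k => a k * x k) x hjk
    by_cases hik : i = k
    · subst hik
      rw [if_pos rfl, if_neg hij]
      have h₁ : ∑ σ : Equiv.Perm ι, a (σ i) * x (σ j) * x (σ i) =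
          ∑ σ : Equiv.Perm ι, a (σ i) * x (σ i) * x (σ j) :=
        Finset.sum_congr rfl fun σ _ => by ring
      rw [h₁]
      linear_combination w i * R j i * (Fintype.card ι - 2) *
        sum_perm_apply₂ (fun k => a k * x k) x hij
    · rw [if_neg hij, if_neg hik]
      linear_combination w i * R j k * sum_perm_apply₃ a x x hij hik hjk
  have hexp : ∑ σ : Equiv.Perm ι, (∑ i, w i * a (σ i)) * ∑ j, ∑ k, R j k * (x (σ j) * x (σ k)) =
      ∑ i, ∑ j, ∑ k, ∑ σ : Equiv.Perm ι, w i * a (σ i) * (R j k * (x (σ j) * x (σ k))) := by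
    simp only [Finset.sum_mul]
    simp only [Finset.mul_sum, Finset.sum_comm (s := (Finset.univ : Finset (Equiv.Perm ι)))]
  rw [hexp, Finset.mul_sum]
  refine Finset.sum_eq_zero fun i _ => ?_
  rw [Finset.mul_sum]
  have hjk (j : ι) : (Fintype.card ι : ℝ) * (Fintype.card ι - 1) * (Fintype.card ι - 2) *
      ∑ k, ∑ σ : Equiv.Perm ι, w i * a (σ i) * (R j k * (x (σ j) * x (σ k))) =
      ∑ k, w i * (R j k * (D + (if i = j then E else 0) + if i = k then E else 0)) := by
    rw [Finset.mul_sum]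
    exact Finset.sum_congr rfl fun k _ => hDE i j k
  simp only [hjk]
  simp only [mul_add, Finset.sum_add_distrib, mul_ite, mul_zero, Finset.sum_ite_eq,
    Finset.mem_univ, if_true, ← Finset.mul_sum, ← Finset.sum_mul, hrow, zero_mul,
    Finset.sum_const_zero, Finset.sum_ite_irrel, hcol, add_zero, ite_self]

theorem sum_perm_quadratic_sq (hsymm : ∀ i j, R i j = R j i) (hR : ∀ i, R i i = 0)
    (hrow : ∀ i, ∑ j, R i j = 0) (x : ι → ℝ) :
    (Fintype.card ι : ℝ) * (Fintype.card ι - 1) * (Fintype.card ι - 2) * (Fintype.card ι - 3) *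
        ∑ σ : Equiv.Perm ι, (∑ i, ∑ j, R i j * (x (σ i) * x (σ j))) ^ 2 =
      2 * Fintype.card (Equiv.Perm ι) * ((∑ k, x k) ^ 4
        - 2 * Fintype.card ι * (∑ k, x k) ^ 2 * (∑ k, x k ^ 2)
        + 4 * (Fintype.card ι - 1) * (∑ k, x k) * (∑ k, x k ^ 3)
        + (Fintype.card ι ^ 2 - 3 * Fintype.card ι + 3) * (∑ k, x k ^ 2) ^ 2
        - Fintype.card ι * (Fintype.card ι - 1) * ∑ k, x k ^ 4) * ∑ i, ∑ j, R i j ^ 2 := by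
  have hcol (j : ι) : ∑ i, R i j = 0 := by simpa only [hsymm j] using hrow j
  set n : ℝ := ((Fintype.card ι : ℕ) : ℝ) with hn
  set N : ℝ := ((Fintype.card (Equiv.Perm ι) : ℕ) : ℝ) with hN
  set P₁ : ℝ := ∑ k, x k with hP₁
  set P₂ : ℝ := ∑ k, x k ^ 2 with hP₂
  set P₃ : ℝ := ∑ k, x k ^ 3 with hP₃
  set P₄ : ℝ := ∑ k, x k ^ 4 with hP₄
  set S : ι → ι → ι → ι → ℝ := fun i j k l =>
    ∑ σ : Equiv.Perm ι, x (σ i) * x (σ j) * (x (σ k) * x (σ l)) with hS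
  have S_left i j k l : S i j k l = S j i k l := Finset.sum_congr rfl fun σ _ => by ring
  have S_right i j k l : S i j k l = S i j l k := Finset.sum_congr rfl fun σ _ => by ring
  have e₂ (m : ι) : x m * x m = x m ^ 2 := by ring
  have e₃ (m : ι) : x m ^ 2 * x m = x m ^ 3 := by ring
  have e₃' (m : ι) : x m * x m ^ 2 = x m ^ 3 := by ring
  have e₄ (m : ι) : x m ^ 3 * x m = x m ^ 4 := by ring
  have e₄' (m : ι) : x m ^ 2 * x m ^ 2 = x m ^ 4 := by ring
  have S₂ i j (hij : i ≠ j) : n * (n - 1) * S i j i j = N * (P₂ * P₂ - P₄) := by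
    have h := sum_perm_apply₂ (fun k => x k ^ 2) (fun k => x k ^ 2) hij
    simp only [e₄'] at h
    rw [← h]
    congr 1
    exact Finset.sum_congr rfl fun σ _ => by ring
  have S₃ i j k (hij : i ≠ j) (hik : i ≠ k) (hjk : j ≠ k) :
      n * (n - 1) * (n - 2) * S i j i k =
        N * (P₂ * P₁ * P₁ - P₃ * P₁ - P₃ * P₁ - P₂ * P₂ + 2 * P₄) := by
    have h := sum_perm_apply₃ (fun k => x k ^ 2) x x hij hik hjk
    simp only [e₂, e₃, e₄] at h
    rw [← h]
    congr 1
    exact Finset.sum_congr rfl fun σ _ => by ring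
  have S₄ i j k l (hij : i ≠ j) (hik : i ≠ k) (hil : i ≠ l) (hjk : j ≠ k) (hjl : j ≠ l)
      (hkl : k ≠ l) : n * (n - 1) * (n - 2) * (n - 3) * S i j k l =
        N * (P₁ ^ 4 - 6 * P₁ ^ 2 * P₂ + 8 * P₁ * P₃ + 3 * P₂ ^ 2 - 6 * P₄) := by
    rw [← sum_perm_apply₄ x hij hik hil hjk hjl hkl]
    congr 1
    exact Finset.sum_congr rfl fun σ _ => by ring
  set M₄ := N * (P₁ ^ 4 - 6 * P₁ ^ 2 * P₂ + 8 * P₁ * P₃ + 3 * P₂ ^ 2 - 6 * P₄) with hM₄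
  set M₃ := (n - 3) * (N * (P₂ * P₁ * P₁ - P₃ * P₁ - P₃ * P₁ - P₂ * P₂ + 2 * P₄)) with hM₃
  set M₂ := (n - 2) * (n - 3) * (N * (P₂ * P₂ - P₄)) with hM₂
  have key (i j k l : ι) : n * (n - 1) * (n - 2) * (n - 3) * (R i j * (R k l * S i j k l)) =
      R i j * (R k l * (M₄ + ((if i = k then M₃ - M₄ else 0) + (if i = l then M₃ - M₄ else 0)
        + (if j = k then M₃ - M₄ else 0) + (if j = l then M₃ - M₄ else 0))
        + ((if i = k then if j = l then M₂ - 2 * M₃ + M₄ else 0 else 0)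
          + (if i = l then if j = k then M₂ - 2 * M₃ + M₄ else 0 else 0)))) := by
    by_cases hij : i = j
    · subst hij
      simp [hR]
    by_cases hkl : k = l
    · subst hkl
      simp [hR]
    by_cases hik : i = k
    · subst hik
      by_cases hjl : j = l
      · subst hjl
        simp only [if_true, hij, Ne.symm hij, if_false]
        linear_combination R i j * R i j * (n - 2) * (n - 3) * S₂ i j hij
      · simp only [if_true, hkl, hjl, Ne.symm hij, if_false]
        linear_combination R i j * R i l * (n - 3) * S₃ i j l hij hkl hjl
    by_cases hil : i = l
    · subst hil
      rw [S_right]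
      by_cases hjk : j = k
      · subst hjk
        simp only [if_true, hij, Ne.symm hij, if_false]
        linear_combination R i j * R j i * (n - 2) * (n - 3) * S₂ i j hij
      · simp only [if_true, hik, hjk, Ne.symm hij, if_false]
        linear_combination R i j * R k i * (n - 3) * S₃ i j k hij hik hjk
    by_cases hjk : j = k
    · subst hjk
      rw [S_left]
      simp only [if_true, hik, hil, hkl, if_false]
      linear_combination R i j * R j l * (n - 3) * S₃ j i l (Ne.symm hij) hkl hil
    by_cases hjl : j = l
    · subst hjl
      rw [S_left, S_right]
      simp only [if_true, hik, hij, hjk, if_false]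
      linear_combination R i j * R k j * (n - 3) * S₃ j i k (Ne.symm hij) hjk hik
    · simp only [hik, hil, hjk, hjl, if_false]
      linear_combination R i j * R k l * S₄ i j k l hij hik hil hjk hjl hkl
  have hexp : ∑ σ : Equiv.Perm ι, (∑ i, ∑ j, R i j * (x (σ i) * x (σ j))) ^ 2 =
      ∑ i, ∑ j, ∑ k, ∑ l, R i j * (R k l * S i j k l) := by
    simp only [sq, Finset.sum_mul, hS]
    simp only [Finset.mul_sum, Finset.sum_comm (s := (Finset.univ : Finset (Equiv.Perm ι)))]
    refine Finset.sum_congr rfl fun i _ => Finset.sum_congr rfl fun j _ =>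
      Finset.sum_congr rfl fun k _ => Finset.sum_congr rfl fun l _ =>
      Finset.sum_congr rfl fun σ _ => by ring
  have hM : M₂ - 2 * M₃ + M₄ = N * (P₁ ^ 4 - 2 * n * P₁ ^ 2 * P₂ + 4 * (n - 1) * P₁ * P₃
      + (n ^ 2 - 3 * n + 3) * P₂ ^ 2 - n * (n - 1) * P₄) := by
    rw [hM₂, hM₃, hM₄]
    ring
  rw [hexp]
  simp only [Finset.mul_sum, key]
  refine Finset.sum_congr rfl fun i _ => Finset.sum_congr rfl fun j _ => ?_
  simp only [mul_add, Finset.sum_add_distrib, mul_ite, mul_zero, Finset.sum_ite_eq,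
    Finset.mem_univ, if_true, ← Finset.mul_sum, ← Finset.sum_mul, hrow, zero_mul,
    Finset.sum_const_zero, Finset.sum_ite_irrel, hcol, add_zero, zero_add, ite_self]
  rw [hsymm j i]
  linear_combination 2 * R i j ^ 2 * hM

end Traceless

end Moments

theorem exists_isotypic_decomposition {ι : Type*} [Fintype ι] [DecidableEq ι]
    (hn : 3 ≤ Fintype.card ι) {A : ι → ι → ℝ} (hA : ∀ i j, A i j = A j i) :
    ∃ (u v : ℝ) (w z : ι → ℝ) (R : ι → ι → ℝ), ∑ i, w i = 0 ∧ ∑ i, z i = 0 ∧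
      (∀ i j, R i j = R j i) ∧ (∀ i, R i i = 0) ∧ (∀ i, ∑ j, R i j = 0) ∧
      ∀ x : ι → ℝ, ∑ i, ∑ j, A i j * (x i * x j) =
        (u * (∑ i, x i) ^ 2 + v * ∑ i, x i ^ 2)
          + ((∑ i, x i) * ∑ i, w i * x i + ∑ i, z i * x i ^ 2)
          + ∑ i, ∑ j, R i j * (x i * x j) := by
  obtain ⟨n, hn_def⟩ : ∃ n : ℝ, n = Fintype.card ι := ⟨_, rfl⟩
  have hn3 : (3 : ℝ) ≤ n := by rw [hn_def]; exact_mod_cast hn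
  have h0 : n ≠ 0 := by linarith
  have h1 : n - 1 ≠ 0 := by linarith
  have h2 : n - 2 ≠ 0 := by linarith
  set b : ι → ℝ := fun i => ∑ j, A i j - A i i with hb
  set c : ℝ := (∑ i, b i) / (n * (n - 1)) with hc
  set e : ι → ℝ := fun i => (b i - (n - 1) * c) / (n - 2) with he
  set d : ℝ := (∑ i, A i i) / n with hd
  set R : ι → ι → ℝ := fun i j =>
    A i j - c - e i - e j - if i = j then A i i - c - 2 * e i else 0 with hR
  have he_sum : ∑ i, e i = 0 := by
    simp only [he, ← Finset.sum_div, Finset.sum_sub_distrib, Finset.sum_const, Finset.card_univ,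
      nsmul_eq_mul, ← hn_def, hc]
    field_simp
    ring
  have he_mul (i : ι) : (n - 2) * e i = ∑ j, A i j - A i i - (n - 1) * c := by
    simp only [he, hb]
    field_simp
  refine ⟨c, d - c, fun i => 2 * e i, fun i => A i i - d - 2 * e i, R, ?_, ?_, ?_, ?_, ?_, ?_⟩
  · rw [← Finset.mul_sum, he_sum, mul_zero]
  · simp only [Finset.sum_sub_distrib, ← Finset.mul_sum, he_sum, Finset.sum_const,
      Finset.card_univ, nsmul_eq_mul, ← hn_def, hd]
    field_simp
    ring
  · intro i j
    by_cases hij : i = j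
    · rw [hij]
    · simp only [hR, hij, Ne.symm hij, if_false, hA i j]
      ring
  · intro i
    simp only [hR, if_true]
    ring
  · intro i
    simp only [hR, Finset.sum_sub_distrib, Finset.sum_ite_eq, Finset.mem_univ, if_true, he_sum,
      Finset.sum_const, Finset.card_univ, nsmul_eq_mul, ← hn_def]
    linear_combination -he_mul i
  · intro x
    have hsplit (i j : ι) : A i j * (x i * x j) = c * (x i * x j) + e i * x i * x j
        + x i * (e j * x j) + (if i = j then (A i i - c - 2 * e i) * (x i * x j) else 0)
        + R i j * (x i * x j) := by
      simp only [hR]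
      split_ifs <;> ring
    have hdiag (i : ι) : (A i i - c - 2 * e i) * (x i * x i) =
        (d - c) * x i ^ 2 + (A i i - d - 2 * e i) * x i ^ 2 := by ring
    simp only [hsplit, Finset.sum_add_distrib, Finset.sum_ite_eq, Finset.mem_univ, if_true,
      ← Finset.mul_sum, ← Finset.sum_mul, hdiag, mul_assoc (2 : ℝ)]
    ring

theorem posSemidef_fin_two_of_forall {a b c : ℝ}
    (h : ∀ s t : ℝ, 0 ≤ a * s ^ 2 + 2 * b * (s * t) + c * t ^ 2) :
    Matrix.PosSemidef !![a, b; b, c] := by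
  refine Matrix.PosSemidef.of_dotProduct_mulVec_nonneg ?_ fun x => ?_
  · ext i j
    fin_cases i <;> fin_cases j <;> simp
  · refine (h (x 0) (x 1)).trans_eq ?_
    simp [Matrix.mulVec, dotProduct, Fin.sum_univ_two]
    ring

/-- The symmetric quartics of the form described by two positive semidefinite `2 × 2` matrices
and a nonnegative scalar, one for each isotypic component of the quadratic forms. -/
def IsIsotypicSos (n : ℕ) (f : MvPolynomial (Fin n) ℝ) : Prop :=
  ∃ a11 a12 a22 b11 b12 b22 γ : ℝ, 0 ≤ γ ∧
    Matrix.PosSemidef !![a11, a12; a12, a22] ∧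
    Matrix.PosSemidef !![b11, b12; b12, b22] ∧
    f = C a11 * psum n 1 ^ 4
      + C (2 * a12) * (psum n 2 * psum n 1 ^ 2)
      + C a22 * psum n 2 ^ 2
      + C b11 * (psum n 2 * psum n 1 ^ 2 - psum n 1 ^ 4)
      + C (2 * b12) * (psum n 3 * psum n 1 - psum n 2 * psum n 1 ^ 2)
      + C b22 * (psum n 4 - psum n 2 ^ 2)
      + C γ * (C ((1 : ℝ) / 2) * psum n 1 ^ 4
          - psum n 2 * psum n 1 ^ 2
          + C (((n : ℝ) ^ 2 - 3 * (n : ℝ) + 3) / (2 * (n : ℝ) ^ 2)) * psum n 2 ^ 2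
          + C ((2 * (n : ℝ) - 2) / (n : ℝ) ^ 2) * (psum n 3 * psum n 1)
          + C ((1 - (n : ℝ)) / (2 * (n : ℝ) ^ 2)) * psum n 4)

namespace IsIsotypicSos

variable {n : ℕ} {f g : MvPolynomial (Fin n) ℝ}

theorem zero : IsIsotypicSos n 0 :=
  ⟨0, 0, 0, 0, 0, 0, 0, le_rfl, posSemidef_fin_two_of_forall (by simp),
    posSemidef_fin_two_of_forall (by simp), by simp⟩

theorem add (hf : IsIsotypicSos n f) (hg : IsIsotypicSos n g) : IsIsotypicSos n (f + g) := by
  obtain ⟨a₁, a₂, a₃, b₁, b₂, b₃, γ, hγ, ha, hb, rfl⟩ := hf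
  obtain ⟨a₁', a₂', a₃', b₁', b₂', b₃', γ', hγ', ha', hb', rfl⟩ := hg
  refine ⟨a₁ + a₁', a₂ + a₂', a₃ + a₃', b₁ + b₁', b₂ + b₂', b₃ + b₃', γ + γ', add_nonneg hγ hγ',
    by simpa using ha.add ha', by simpa using hb.add hb', ?_⟩
  simp only [C_add, MvPolynomial.C_mul]
  ring

theorem C_mul {c : ℝ} (hc : 0 ≤ c) (hf : IsIsotypicSos n f) : IsIsotypicSos n (C c * f) := by
  obtain ⟨a₁, a₂, a₃, b₁, b₂, b₃, γ, hγ, ha, hb, rfl⟩ := hf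
  refine ⟨c * a₁, c * a₂, c * a₃, c * b₁, c * b₂, c * b₃, c * γ, mul_nonneg hc hγ,
    by simpa using ha.smul hc, by simpa using hb.smul hc, ?_⟩
  simp only [MvPolynomial.C_mul]
  ring

end IsIsotypicSos

open scoped Pointwise in
theorem exists_eval_eq_of_isHomogeneous_two {ι : Type*} [Fintype ι] [DecidableEq ι]
    {q : MvPolynomial ι ℝ} (hq : q.IsHomogeneous 2) :
    ∃ A : ι → ι → ℝ, (∀ i j, A i j = A j i) ∧
      ∀ x : ι → ℝ, eval x q = ∑ i, ∑ j, A i j * (x i * x j) := by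
  have hmem : q ∈ Submodule.span ℝ
      (Set.range (X : ι → MvPolynomial ι ℝ) * Set.range (X : ι → MvPolynomial ι ℝ)) := by
    rw [← Submodule.span_mul_span, ← homogeneousSubmodule_one_eq_span_X (σ := ι) (R := ℝ), ← sq,
      homogeneousSubmodule_one_pow]
    exact hq
  clear hq
  induction hmem using Submodule.span_induction with
  | mem p hp =>
    obtain ⟨_, ⟨k, rfl⟩, _, ⟨l, rfl⟩, rfl⟩ := hp
    refine ⟨fun i j => (if i = k then if j = l then 1 / 2 else 0 else 0)
      + if j = k then if i = l then 1 / 2 else 0 else 0, fun i j => add_comm _ _, fun x => ?_⟩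
    simp [add_mul, Finset.sum_add_distrib, ite_mul, Finset.sum_ite_irrel]
    ring
  | zero => exact ⟨0, fun _ _ => rfl, by simp⟩
  | add p p' _ _ hp hp' =>
    obtain ⟨A, hA, h⟩ := hp
    obtain ⟨A', hA', h'⟩ := hp'
    exact ⟨A + A', fun i j => by simp [hA i j, hA' i j], fun x => by
      simp [h, h', add_mul, Finset.sum_add_distrib]⟩
  | smul c p _ hp =>
    obtain ⟨A, hA, h⟩ := hp
    exact ⟨c • A, fun i j => by simp [hA i j], fun x => by
      simp [h, Finset.mul_sum, mul_assoc]⟩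

theorem isIsotypicSos_sum_rename_sq {n : ℕ} (hn : 4 ≤ n) {q : MvPolynomial (Fin n) ℝ}
    (hq : q.IsHomogeneous 2) :
    IsIsotypicSos n (∑ σ : Equiv.Perm (Fin n), rename σ (q * q)) := by
  obtain ⟨A, hA, hqA⟩ := exists_eval_eq_of_isHomogeneous_two hq
  have hcard : Fintype.card (Fin n) = n := Fintype.card_fin n
  obtain ⟨u, v, w, z, R, hw, hz, hsymm, hdiag, hrow, hdec⟩ :=
    exists_isotypic_decomposition (by omega) hA
  have hn4 : (4 : ℝ) ≤ n := by exact_mod_cast hn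
  have h0 : (n : ℝ) ≠ 0 := by linarith
  have h1 : (n : ℝ) - 1 ≠ 0 := by linarith
  have h2 : (n : ℝ) - 2 ≠ 0 := by linarith
  have h3 : (n : ℝ) - 3 ≠ 0 := by linarith
  obtain ⟨N, hN⟩ : ∃ N : ℝ, N = Fintype.card (Equiv.Perm (Fin n)) := ⟨_, rfl⟩
  have hN0 : 0 ≤ N := hN ▸ Nat.cast_nonneg _
  have hK : 0 ≤ N / (n * (n - 1) : ℝ) :=
    div_nonneg hN0 (mul_nonneg (by linarith) (by linarith))
  refine ⟨N * (u * n ^ 2) ^ 2, N * ((u * n ^ 2) * (v * n)), N * (v * n) ^ 2,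
    N / (n * (n - 1)) * (n ^ 4 * ∑ i, w i * w i), N / (n * (n - 1)) * (n ^ 3 * ∑ i, w i * z i),
    N / (n * (n - 1)) * (n ^ 2 * ∑ i, z i * z i),
    4 * N * n ^ 4 / (n * (n - 1) * (n - 2) * (n - 3)) * ∑ i, ∑ j, R i j ^ 2, ?_, ?_, ?_, ?_⟩
  · refine mul_nonneg (div_nonneg (by positivity) ?_)
      (Finset.sum_nonneg fun i _ => Finset.sum_nonneg fun j _ => sq_nonneg _)
    exact mul_nonneg (mul_nonneg (mul_nonneg (by linarith) (by linarith)) (by linarith))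
      (by linarith)
  · refine posSemidef_fin_two_of_forall fun s t => ?_
    have h : 0 ≤ N * (u * n ^ 2 * s + v * n * t) ^ 2 := mul_nonneg hN0 (sq_nonneg _)
    linarith
  · refine posSemidef_fin_two_of_forall fun s t => ?_
    have h : 0 ≤ N / (n * (n - 1) : ℝ) * ∑ i, (s * n ^ 2 * w i + t * n * z i) ^ 2 :=
      mul_nonneg hK (Finset.sum_nonneg fun i _ => sq_nonneg _)
    have e (i : Fin n) : (s * n ^ 2 * w i + t * n * z i) ^ 2 = s ^ 2 * n ^ 4 * (w i * w i)
        + 2 * (s * t) * n ^ 3 * (w i * z i) + t ^ 2 * n ^ 2 * (z i * z i) := by ring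
    simp only [e, Finset.sum_add_distrib, ← Finset.mul_sum] at h
    linarith
  · refine MvPolynomial.funext fun x => ?_
    have hlin := sum_perm_linear hw x
    have hlin' := sum_perm_linear hz (fun i => x i ^ 2)
    have hww := sum_perm_linear_mul_linear w hw x x
    have hwz := sum_perm_linear_mul_linear w hz x (fun i => x i ^ 2)
    have hzz := sum_perm_linear_mul_linear z hz (fun i => x i ^ 2) (fun i => x i ^ 2)
    have hquad := sum_perm_quadratic hdiag hrow (by omega) x
    have hwR := sum_perm_linear_mul_quadratic hsymm hdiag hrow (by omega) w x x
    have hzR := sum_perm_linear_mul_quadratic hsymm hdiag hrow (by omega) z (fun i => x i ^ 2) x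
    have hRR := sum_perm_quadratic_sq hsymm hdiag hrow x
    have e₂ (m : Fin n) : x m * x m = x m ^ 2 := by ring
    have e₃ (m : Fin n) : x m * x m ^ 2 = x m ^ 3 := by ring
    have e₄ (m : Fin n) : x m ^ 2 * x m ^ 2 = x m ^ 4 := by ring
    simp only [hcard, ← hN, e₂, e₃, e₄] at hww hwz hzz hRR
    have hL : ∑ σ : Equiv.Perm (Fin n), eval x (rename σ (q * q)) =
        N * (u * (∑ i, x i) ^ 2 + v * ∑ i, x i ^ 2) ^ 2
          + (∑ i, x i) ^ 2 * ∑ σ : Equiv.Perm (Fin n),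
            (∑ i, w i * x (σ i)) * ∑ i, w i * x (σ i)
          + 2 * (∑ i, x i) * ∑ σ : Equiv.Perm (Fin n),
            (∑ i, w i * x (σ i)) * ∑ i, z i * x (σ i) ^ 2
          + ∑ σ : Equiv.Perm (Fin n), (∑ i, z i * x (σ i) ^ 2) * ∑ i, z i * x (σ i) ^ 2
          + ∑ σ : Equiv.Perm (Fin n), (∑ i, ∑ j, R i j * (x (σ i) * x (σ j))) ^ 2 := by
      have e (σ : Equiv.Perm (Fin n)) : eval x (rename σ (q * q)) =
          (u * (∑ i, x i) ^ 2 + v * ∑ i, x i ^ 2) ^ 2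
          + (∑ i, x i) ^ 2 * ((∑ i, w i * x (σ i)) * ∑ i, w i * x (σ i))
          + 2 * (∑ i, x i) * ((∑ i, w i * x (σ i)) * ∑ i, z i * x (σ i) ^ 2)
          + (∑ i, z i * x (σ i) ^ 2) * ∑ i, z i * x (σ i) ^ 2
          + (∑ i, ∑ j, R i j * (x (σ i) * x (σ j))) ^ 2
          + 2 * (u * (∑ i, x i) ^ 2 + v * ∑ i, x i ^ 2) * (∑ i, x i) * ∑ i, w i * x (σ i)
          + 2 * (u * (∑ i, x i) ^ 2 + v * ∑ i, x i ^ 2) * ∑ i, z i * x (σ i) ^ 2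
          + 2 * (u * (∑ i, x i) ^ 2 + v * ∑ i, x i ^ 2)
            * ∑ i, ∑ j, R i j * (x (σ i) * x (σ j))
          + 2 * (∑ i, x i) * ((∑ i, w i * x (σ i)) * ∑ i, ∑ j, R i j * (x (σ i) * x (σ j)))
          + 2 * ((∑ i, z i * x (σ i) ^ 2) * ∑ i, ∑ j, R i j * (x (σ i) * x (σ j))) := by
        rw [eval_rename, map_mul, hqA, hdec]
        simp only [Function.comp_apply, Equiv.sum_comp σ x, Equiv.sum_comp σ (fun i => x i ^ 2)]
        ring
      simp only [e, Finset.sum_add_distrib, ← Finset.mul_sum, hlin, hlin', hquad, hwR, hzR,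
        Finset.sum_const, Finset.card_univ, nsmul_eq_mul, ← hN]
      ring
    rw [map_sum, hL]
    simp only [_root_.psum, map_add, map_sub, map_mul, map_pow, map_sum, eval_C, eval_X, pow_one]
    generalize ∑ i, x i = P₁ at *
    generalize ∑ i, x i ^ 2 = P₂ at *
    generalize ∑ i, x i ^ 3 = P₃ at *
    generalize ∑ i, x i ^ 4 = P₄ at *
    have hK2 : (n : ℝ) * (n - 1) ≠ 0 := mul_ne_zero h0 h1
    have hK4 : (n : ℝ) * (n - 1) * (n - 2) * (n - 3) ≠ 0 :=
      mul_ne_zero (mul_ne_zero hK2 h2) h3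
    rw [mul_comm, ← eq_div_iff hK2] at hww hwz hzz
    rw [mul_comm, ← eq_div_iff hK4] at hRR
    rw [hww, hwz, hzz, hRR]
    field_simp
    ring

theorem Polynomial.coeff_eq_zero_of_sq_eval_le {P : Polynomial ℝ} {B : ℝ}
    (h : ∀ t : ℝ, P.eval t ^ 2 ≤ B * t ^ 4) {d : ℕ} (hd : d ≠ 2) : P.coeff d = 0 := by
  have extend {f g : ℝ → ℝ} (hf : Continuous f) (hg : Continuous g)
      (hfg : ∀ t, t ≠ 0 → f t ≤ g t) (t : ℝ) : f t ≤ g t :=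
    (isClosed_le hf hg).closure_subset_iff.2 (fun t ht => hfg t ht) (dense_compl_singleton 0 t)
  have cancel {Q : Polynomial ℝ} {k : ℕ}
      (hQ : ∀ t : ℝ, Q.eval t ^ 2 ≤ B * t ^ (2 * k + 2)) :
      ∃ Q' : Polynomial ℝ, Q = Polynomial.X * Q' ∧ ∀ t : ℝ, Q'.eval t ^ 2 ≤ B * t ^ (2 * k) := by
    have h0 : Q.coeff 0 = 0 := by
      have := hQ 0
      rw [Polynomial.coeff_zero_eq_eval_zero]
      simpa [sq_nonpos_iff] using this
    obtain ⟨Q', rfl⟩ := Polynomial.X_dvd_iff.2 h0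
    refine ⟨Q', rfl, extend (by fun_prop) (by fun_prop) fun t ht => ?_⟩
    have h1 := hQ t
    rw [Polynomial.eval_mul, Polynomial.eval_X] at h1
    have ht2 : 0 < t ^ 2 := by positivity
    refine le_of_mul_le_mul_left ?_ ht2
    linarith [h1, show B * t ^ (2 * k + 2) = t ^ 2 * (B * t ^ (2 * k)) by ring]
  obtain ⟨P₁, rfl, h₁⟩ := cancel (k := 1) h
  obtain ⟨P₂, rfl, h₂⟩ := cancel (k := 0) h₁
  have hdeg : P₂.degree ≤ 0 := by
    rw [← Polynomial.isBoundedUnder_abs_atTop_iff]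
    refine Filter.isBoundedUnder_of ⟨√B, fun t => ?_⟩
    exact Real.abs_le_sqrt (by simpa using h₂ t)
  rw [Polynomial.eq_C_of_degree_le_zero hdeg, ← mul_assoc, ← sq, mul_comm,
    Polynomial.coeff_C_mul_X_pow, if_neg hd]

theorem MvPolynomial.IsHomogeneous.eval_smul {ι R : Type*} [Fintype ι] [CommSemiring R]
    {p : MvPolynomial ι R} {d : ℕ} (hp : p.IsHomogeneous d) (t : R) (x : ι → R) :
    eval (t • x) p = t ^ d * eval x p := by
  rw [eval_eq', eval_eq', Finset.mul_sum]
  refine Finset.sum_congr rfl fun m hm => ?_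
  have hdeg : ∑ i, m i = d := by
    rw [← hp (mem_support_iff.1 hm), Finsupp.weight_apply, Finsupp.sum_fintype _ _ (by simp)]
    simp
  simp only [Pi.smul_apply, smul_eq_mul, mul_pow, Finset.prod_mul_distrib,
    Finset.prod_pow_eq_pow_sum, hdeg]
  ring

theorem isHomogeneous_two_of_sq_eval_le {ι : Type*} [Fintype ι] {q : MvPolynomial ι ℝ}
    (h : ∀ x : ι → ℝ, ∃ B : ℝ, ∀ t : ℝ, eval (t • x) q ^ 2 ≤ B * t ^ 4) :
    q.IsHomogeneous 2 := by
  rw [← sum_homogeneousComponent q]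
  refine IsHomogeneous.sum _ _ _ fun d hd => ?_
  rcases eq_or_ne d 2 with rfl | hd2
  · exact homogeneousComponent_isHomogeneous _ _
  suffices homogeneousComponent d q = 0 by
    rw [this]
    exact isHomogeneous_zero _ _ _
  refine MvPolynomial.funext fun x => ?_
  obtain ⟨B, hB⟩ := h x
  set P : Polynomial ℝ := ∑ k ∈ Finset.range (q.totalDegree + 1),
    Polynomial.C (eval x (homogeneousComponent k q)) * Polynomial.X ^ k with hP
  have hPq (t : ℝ) : P.eval t = eval (t • x) q := by
    conv_rhs => rw [← sum_homogeneousComponent q]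
    simp only [hP, map_sum, Polynomial.eval_finsetSum, Polynomial.eval_mul, Polynomial.eval_C,
      Polynomial.eval_pow, Polynomial.eval_X,
      (homogeneousComponent_isHomogeneous _ q).eval_smul, mul_comm]
  have hcoeff := Polynomial.coeff_eq_zero_of_sq_eval_le (P := P) (B := B)
    (fun t => by rw [hPq]; exact hB t) hd2
  rw [hP, Polynomial.finsetSum_coeff] at hcoeff
  simp only [Polynomial.coeff_C_mul_X_pow, Finset.sum_ite_eq, hd, if_true] at hcoeff
  rw [hcoeff, map_zero]

theorem isIsotypicSos_sum_rename {n : ℕ} (hn : 4 ≤ n) {f : MvPolynomial (Fin n) ℝ}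
    (hsos : IsSumSq f)
    (hf : ∀ x : Fin n → ℝ, ∃ B : ℝ, ∀ t : ℝ, eval (t • x) f ≤ B * t ^ 4) :
    IsIsotypicSos n (∑ σ : Equiv.Perm (Fin n), rename σ f) := by
  induction hsos with
  | zero => simpa using IsIsotypicSos.zero
  | sq_add q hs ih =>
    rename_i s
    have hs_nonneg (x : Fin n → ℝ) : 0 ≤ eval x s := by
      clear ih hf
      induction hs with
      | zero => simp
      | sq_add p _ ih =>
        rw [map_add, map_mul]
        exact add_nonneg (mul_self_nonneg _) ih
    simp only [map_add, Finset.sum_add_distrib]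
    refine (isIsotypicSos_sum_rename_sq hn (isHomogeneous_two_of_sq_eval_le fun x => ?_)).add
      (ih fun x => ?_)
    · obtain ⟨B, hB⟩ := hf x
      refine ⟨B, fun t => ?_⟩
      have h := hB t
      rw [map_add, map_mul] at h
      linarith [hs_nonneg (t • x), sq (eval (t • x) q)]
    · obtain ⟨B, hB⟩ := hf x
      refine ⟨B, fun t => ?_⟩
      have h := hB t
      rw [map_add, map_mul] at h
      linarith [mul_self_nonneg (eval (t • x) q)]

/-- Every symmetric quartic form in `n ≥ 4` variables that is a sum of squares
admits the decomposition of Theorem 6.1, with `γ ≥ 0` and two positive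
semidefinite `2×2` coefficient matrices. -/
theorem sos_quartic_decomposition (n : ℕ) (hn : 4 ≤ n)
    (f : MvPolynomial (Fin n) ℝ) (hsym : f.IsSymmetric) (hhom : f.IsHomogeneous 4)
    (hsos : IsSumSq f) :
    ∃ a11 a12 a22 b11 b12 b22 γ : ℝ, 0 ≤ γ ∧
      Matrix.PosSemidef !![a11, a12; a12, a22] ∧
      Matrix.PosSemidef !![b11, b12; b12, b22] ∧
      f = C a11 * psum n 1 ^ 4
        + C (2 * a12) * (psum n 2 * psum n 1 ^ 2)
        + C a22 * psum n 2 ^ 2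
        + C b11 * (psum n 2 * psum n 1 ^ 2 - psum n 1 ^ 4)
        + C (2 * b12) * (psum n 3 * psum n 1 - psum n 2 * psum n 1 ^ 2)
        + C b22 * (psum n 4 - psum n 2 ^ 2)
        + C γ * (C ((1 : ℝ) / 2) * psum n 1 ^ 4
            - psum n 2 * psum n 1 ^ 2
            + C (((n : ℝ) ^ 2 - 3 * (n : ℝ) + 3) / (2 * (n : ℝ) ^ 2)) * psum n 2 ^ 2
            + C ((2 * (n : ℝ) - 2) / (n : ℝ) ^ 2) * (psum n 3 * psum n 1)
            + C ((1 - (n : ℝ)) / (2 * (n : ℝ) ^ 2)) * psum n 4) := by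
  have havg : IsIsotypicSos n (∑ σ : Equiv.Perm (Fin n), rename σ f) :=
    isIsotypicSos_sum_rename hn hsos fun x =>
      ⟨eval x f, fun t => by rw [hhom.eval_smul, mul_comm]⟩
  have hN : (Fintype.card (Equiv.Perm (Fin n)) : ℝ) ≠ 0 :=
    Nat.cast_ne_zero.2 Fintype.card_ne_zero
  have hf : C (Fintype.card (Equiv.Perm (Fin n)) : ℝ)⁻¹ *
      ∑ σ : Equiv.Perm (Fin n), rename σ f = f := by
    simp only [hsym _, Finset.sum_const, Finset.card_univ, nsmul_eq_mul]
    rw [← mul_assoc, ← map_natCast (C : ℝ →+* MvPolynomial (Fin n) ℝ), ← C_mul,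
      inv_mul_cancel₀ hN, C_1, one_mul]
  have h := havg.C_mul (inv_nonneg.2 (Nat.cast_nonneg (Fintype.card (Equiv.Perm (Fin n)))))
  rw [hf] at h
  exact h
end
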